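/- arXiv:2509.11497 — 2 statements merged into one kernel-verified Lean document; each statement's English description precedes it below -/
import Mathlib

section
/- Let $W$ be a finite Coxeter group with a fixed standard Coxeter element $c$, and suppose $x, x'$ are $c$-sortable elements of $W$. Then the left inversion set of their meet in the right weak order satisfies $T_L(x \wedge x') = T_L(x) \cap T_L(x')$. -/
/-- The set of left inversions of `w`. -/
def leftInvSet {B W : Type*} [Group W] {M : CoxeterMatrix B} (cs : CoxeterSystem M W)
    (w : W) : Set W :=
  {t | cs.IsReflection t ∧ cs.length (t * w) < cs.length w}

/-- The right weak order: `u ≤_R v` iff the left inversion set of `u` is contained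
in that of `v`. -/
def RightWeakLE {B W : Type*} [Group W] {M : CoxeterMatrix B} (cs : CoxeterSystem M W)
    (u v : W) : Prop :=
  leftInvSet cs u ⊆ leftInvSet cs v

/-- `w` is `c`-sortable, where the standard Coxeter element `c` is given by the reduced
word `l` (a list of all the simple reflections): `w` has a reduced word that is a
concatenation `c_{K₁} c_{K₂} ⋯` of subwords of `l` corresponding to a weakly decreasing
sequence of subsets `K₁ ⊇ K₂ ⊇ ⋯`. -/
def CSortable {B W : Type*} [DecidableEq B] [Group W] {M : CoxeterMatrix B}
    (cs : CoxeterSystem M W) (l : List B) (w : W) : Prop :=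
  ∃ K : List (Finset B), List.Chain' (fun a b => b ⊆ a) K ∧
    cs.wordProd (K.map (fun k => l.filter (fun b => b ∈ k))).flatten = w ∧
    cs.length w = ((K.map (fun k => l.filter (fun b => b ∈ k))).flatten).length

/-!
Let `W` act on its geometric representation. Sending a reflection to its positive root identifies
the left inversions of `w` with the positive roots that `w⁻¹` makes negative, and the sets of roots
arising in this way are exactly the finite biclosed sets of positive roots. An intersection of two
such sets is closed; the point is that it is coclosed when the two elements are `c`-sortable.

The word `l` orients the Coxeter diagram and so defines a skew-symmetric form `ω` on the
representation. If `a β + b γ` is an inversion of a sortable element `x` and `ω β γ ≥ 0`, then `β`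
is an inversion of `x`: this is proved by induction, removing the first letter `s` of `l` or
replacing `x` by `s x` and `l` by its rotation, which changes `ω` by the reflection in `s`. Which
of `β` and `γ` is obtained depends on `ω` alone and not on `x`, so for two sortable elements the
same root lies in both inversion sets. Hence the intersection is the inversion set of some element,
and this element is the meet.
-/

open Module Polynomial

namespace GeomRep

theorem reflection_mul_reflection_pow_apply_left {R V : Type*} [CommRing R] [AddCommGroup V]
    [Module R V] {x y : V} {f g : Dual R V} (hf : f x = 2) (hg : g y = 2) {c : R}
    (hfy : f y = -2 * c) (hgx : g x = -2 * c) (k : ℕ) :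
    ((reflection hf * reflection hg) ^ k) x =
      (Chebyshev.U R (2 * k)).eval c • x + (Chebyshev.U R (2 * k - 1)).eval c • y := by
  induction k with
  | zero => simp
  | succ k ih =>
    have hodd := congrArg (eval c) (Chebyshev.U_add_one R (2 * k))
    have heven := congrArg (eval c) (Chebyshev.U_add_one R (2 * k + 1))
    simp only [eval_sub, eval_mul, eval_ofNat, eval_X, add_sub_cancel_right] at hodd heven
    rw [pow_succ', LinearEquiv.mul_apply, ih, LinearEquiv.mul_apply]
    push_cast
    rw [show (2 * (k + 1) : ℤ) = 2 * k + 1 + 1 by ring, add_sub_cancel_right, heven, hodd]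
    simp only [reflection_apply, map_add, map_sub, map_smul, hf, hg, hfy, hgx]
    module

theorem reflection_mul_reflection_pow_apply_left' {R V : Type*} [CommRing R] [AddCommGroup V]
    [Module R V] {x y : V} {f g : Dual R V} (hf : f x = 2) (hg : g y = 2) {c : R}
    (hfy : f y = -2 * c) (hgx : g x = -2 * c) (k : ℕ) :
    reflection hg (((reflection hf * reflection hg) ^ k) x) =
      (Chebyshev.U R (2 * k)).eval c • x + (Chebyshev.U R (2 * k + 1)).eval c • y := by
  rw [reflection_mul_reflection_pow_apply_left hf hg hfy hgx, Chebyshev.U_add_one]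
  simp only [reflection_apply, map_add, map_smul, hg, hgx, eval_sub, eval_mul,
    eval_ofNat, eval_X]
  module

theorem sin_pi_div_pos {m : ℕ} (hm : 2 ≤ m) : 0 < Real.sin (Real.pi / m) := by
  have hm' : (1 : ℝ) < m := by exact_mod_cast hm
  exact Real.sin_pos_of_pos_of_lt_pi (by positivity) (div_lt_self Real.pi_pos hm')

theorem chebyshevU_eval_cos_pi_div_nonneg {m n : ℕ} (hm : m ≠ 1) (hn : m = 0 ∨ n ≤ m) :
    0 ≤ (Chebyshev.U ℝ (n - 1)).eval (Real.cos (Real.pi / m)) := by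
  obtain rfl | hm0 := eq_or_ne m 0
  · simp
  · have hsin : 0 < Real.sin (Real.pi / m) := sin_pi_div_pos (by omega)
    have hm' : (0 : ℝ) < m := by positivity
    have hn' : (n : ℝ) ≤ m := by exact_mod_cast hn.resolve_left hm0
    refine nonneg_of_mul_nonneg_left ?_ hsin
    rw [Chebyshev.U_real_cos]
    push_cast
    rw [sub_add_cancel]
    refine Real.sin_nonneg_of_nonneg_of_le_pi (by positivity) ?_
    calc (n : ℝ) * (Real.pi / m) ≤ m * (Real.pi / m) := by gcongr
      _ = Real.pi := mul_div_cancel₀ _ hm'.ne'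

section Form

variable {B : Type*} (M : CoxeterMatrix B)

/-- The simple root `αᵢ`. The geometric representation has the simple roots as a basis, so that
it lives on finitely supported functions and a vector is `≥ 0` iff all its coordinates are. -/
noncomputable def simpleRoot (i : B) : B →₀ ℝ := Finsupp.single i 1

/-- The invariant symmetric form of the geometric representation, normalised so that roots have
square length `2`. The entry `M i j = 0` stands for `∞`; then `π / M i j = 0`, as it should be. -/
noncomputable def rootForm : LinearMap.BilinForm ℝ (B →₀ ℝ) :=
  Finsupp.linearCombination ℝ fun i =>
    Finsupp.linearCombination ℝ fun j => -2 * Real.cos (Real.pi / M i j)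

theorem simpleRoot_nonneg (i : B) : 0 ≤ simpleRoot i := Finsupp.single_nonneg.2 zero_le_one

@[simp]
theorem simpleRoot_apply_self (i : B) : simpleRoot i i = 1 := Finsupp.single_eq_same

theorem simpleRoot_apply_of_ne {i j : B} (h : j ≠ i) : simpleRoot i j = 0 :=
  Finsupp.single_eq_of_ne h

theorem rootForm_simpleRoot_simpleRoot (i j : B) :
    rootForm M (simpleRoot i) (simpleRoot j) = -2 * Real.cos (Real.pi / M i j) := by
  simp [rootForm, simpleRoot]

@[simp]
theorem rootForm_simpleRoot_self (i : B) : rootForm M (simpleRoot i) (simpleRoot i) = 2 := by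
  simp [rootForm_simpleRoot_simpleRoot]

theorem rootForm_comm (β γ : B →₀ ℝ) : rootForm M β γ = rootForm M γ β := by
  suffices h : rootForm M = (rootForm M).flip from LinearMap.congr_fun₂ h β γ
  ext i j
  change rootForm M (simpleRoot i) (simpleRoot j) = rootForm M (simpleRoot j) (simpleRoot i)
  rw [rootForm_simpleRoot_simpleRoot, rootForm_simpleRoot_simpleRoot, M.symmetric]

theorem rootForm_eq_sum (β γ : B →₀ ℝ) :
    rootForm M β γ = ∑ i ∈ β.support, β i * rootForm M (simpleRoot i) γ := by
  simp [rootForm, simpleRoot, Finsupp.linearCombination_apply, Finsupp.sum, LinearMap.sum_apply]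

/-- The simple reflection `σᵢ β = β - ⟨αᵢ, β⟩ αᵢ`. -/
noncomputable def simpleReflection (i : B) : (B →₀ ℝ) ≃ₗ[ℝ] (B →₀ ℝ) :=
  reflection (rootForm_simpleRoot_self M i)

theorem simpleReflection_apply (i : B) (β : B →₀ ℝ) :
    simpleReflection M i β = β - rootForm M (simpleRoot i) β • simpleRoot i :=
  reflection_apply β _

@[simp]
theorem simpleReflection_simpleRoot_self (i : B) :
    simpleReflection M i (simpleRoot i) = -simpleRoot i :=
  reflection_apply_self _

@[simp]
theorem simpleReflection_simpleReflection (i : B) (β : B →₀ ℝ) :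
    simpleReflection M i (simpleReflection M i β) = β :=
  involutive_reflection _ β

theorem simpleReflection_apply_self (i : B) (β : B →₀ ℝ) :
    simpleReflection M i β i = β i - rootForm M (simpleRoot i) β := by
  simp [simpleReflection_apply]

theorem simpleReflection_apply_of_ne {i j : B} (h : j ≠ i) (β : B →₀ ℝ) :
    simpleReflection M i β j = β j := by
  simp [simpleReflection_apply, simpleRoot_apply_of_ne h]

theorem rootForm_simpleRoot_simpleReflection (i : B) (β : B →₀ ℝ) :
    rootForm M (simpleRoot i) (simpleReflection M i β) = -rootForm M (simpleRoot i) β := by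
  rw [simpleReflection_apply, map_sub, map_smul, rootForm_simpleRoot_self, smul_eq_mul]
  ring

theorem rootForm_simpleReflection (i : B) (β γ : B →₀ ℝ) :
    rootForm M (simpleReflection M i β) (simpleReflection M i γ) = rootForm M β γ := by
  conv_lhs => rw [simpleReflection_apply M i β]
  rw [map_sub, map_smul, LinearMap.sub_apply, LinearMap.smul_apply,
    rootForm_simpleRoot_simpleReflection, simpleReflection_apply, map_sub, map_smul,
    rootForm_comm M β (simpleRoot i), smul_eq_mul, smul_eq_mul]
  ring

theorem simpleReflection_mul_pow_apply_left {i j : B} (hij : i ≠ j) :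
    ((simpleReflection M i * simpleReflection M j) ^ M i j) (simpleRoot i) = simpleRoot i := by
  obtain h0 | h0 := eq_or_ne (M i j) 0
  · rw [h0, pow_zero, LinearEquiv.coe_one, id]
  have hsin : Real.sin (Real.pi / M i j) ≠ 0 :=
    (sin_pi_div_pos (by have := M.off_diagonal i j hij; omega)).ne'
  have hturn : (M i j : ℝ) * (Real.pi / M i j) = Real.pi :=
    mul_div_cancel₀ _ (Nat.cast_ne_zero.2 h0)
  have hU : (Chebyshev.U ℝ (2 * M i j)).eval (Real.cos (Real.pi / M i j)) = 1 := by
    refine mul_right_cancel₀ hsin ?_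
    rw [Chebyshev.U_real_cos, one_mul, ← Real.sin_add_two_pi (Real.pi / M i j)]
    congr 1
    push_cast
    linear_combination 2 * hturn
  have hU' : (Chebyshev.U ℝ (2 * M i j - 1)).eval (Real.cos (Real.pi / M i j)) = 0 := by
    refine mul_right_cancel₀ hsin ?_
    rw [Chebyshev.U_real_cos, zero_mul, ← Real.sin_two_pi]
    congr 1
    push_cast
    linear_combination 2 * hturn
  have hpow := reflection_mul_reflection_pow_apply_left (rootForm_simpleRoot_self M i)
    (rootForm_simpleRoot_self M j) (rootForm_simpleRoot_simpleRoot M i j)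
    (by rw [rootForm_simpleRoot_simpleRoot, M.symmetric]) (M i j)
  rwa [hU, hU', one_smul, zero_smul, add_zero] at hpow

theorem simpleReflection_mul_pow_apply_right {i j : B} (hij : i ≠ j) :
    ((simpleReflection M i * simpleReflection M j) ^ M i j) (simpleRoot j) = simpleRoot j := by
  have hinv : simpleReflection M i * simpleReflection M j =
      (simpleReflection M j * simpleReflection M i)⁻¹ := by
    rw [mul_inv_rev]
    exact congrArg₂ _ (reflection_inv _).symm (reflection_inv _).symm
  have h := simpleReflection_mul_pow_apply_left M hij.symm
  rw [M.symmetric] at h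
  rw [hinv, inv_pow]
  exact (LinearEquiv.symm_apply_eq _).2 h.symm

theorem exists_sub_rootForm_eq_zero {i j : B} (h : 2 ≤ M i j) (β : B →₀ ℝ) :
    ∃ a b : ℝ, rootForm M (simpleRoot i) (β - a • simpleRoot i - b • simpleRoot j) = 0 ∧
      rootForm M (simpleRoot j) (β - a • simpleRoot i - b • simpleRoot j) = 0 := by
  simp only [map_sub, map_smul, rootForm_simpleRoot_self, rootForm_simpleRoot_simpleRoot,
    M.symmetric j i, smul_eq_mul]
  set c := Real.cos (Real.pi / M i j)
  set p := rootForm M (simpleRoot i) β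
  set q := rootForm M (simpleRoot j) β
  have hc : 1 - c ^ 2 ≠ 0 := by
    rw [← Real.sin_sq]
    exact pow_ne_zero 2 (sin_pi_div_pos h).ne'
  refine ⟨(p + c * q) / (2 * (1 - c ^ 2)), (q + c * p) / (2 * (1 - c ^ 2)), ?_, ?_⟩ <;>
    field_simp <;> ring

theorem isLiftable_simpleReflection : M.IsLiftable (simpleReflection M) := by
  intro i j
  obtain rfl | hij := eq_or_ne i j
  · rw [M.diagonal, pow_one]
    exact LinearEquiv.ext (simpleReflection_simpleReflection M i)
  obtain h0 | h0 := eq_or_ne (M i j) 0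
  · rw [h0, pow_zero]
  refine LinearEquiv.ext fun β => ?_
  obtain ⟨a, b, hi, hj⟩ :=
    exists_sub_rootForm_eq_zero M (by have := M.off_diagonal i j hij; omega : 2 ≤ M i j) β
  set u := β - a • simpleRoot i - b • simpleRoot j with hu
  have hfix : (simpleReflection M i * simpleReflection M j) u = u := by
    simp [LinearEquiv.mul_apply, simpleReflection_apply, hi, hj]
  have hfix_pow (k : ℕ) : ((simpleReflection M i * simpleReflection M j) ^ k) u = u := by
    rw [LinearEquiv.coe_pow]
    exact Function.iterate_fixed hfix k
  rw [show β = u + a • simpleRoot i + b • simpleRoot j by rw [hu]; module]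
  simp only [map_add, map_smul, hfix_pow, simpleReflection_mul_pow_apply_left M hij,
    simpleReflection_mul_pow_apply_right M hij, LinearEquiv.coe_one, id]

end Form

section Rep

variable {B W : Type*} [Group W] {M : CoxeterMatrix B} (cs : CoxeterSystem M W)

/-- The geometric representation of a Coxeter group. -/
noncomputable def geomRep : W →* ((B →₀ ℝ) ≃ₗ[ℝ] (B →₀ ℝ)) :=
  cs.lift ⟨simpleReflection M, isLiftable_simpleReflection M⟩

@[simp]
theorem geomRep_simple (i : B) : geomRep cs (cs.simple i) = simpleReflection M i :=
  cs.lift_apply_simple (isLiftable_simpleReflection M) i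

theorem geomRep_mul_apply (v w : W) (β : B →₀ ℝ) :
    geomRep cs (v * w) β = geomRep cs v (geomRep cs w β) := by
  rw [map_mul, LinearEquiv.mul_apply]

@[simp]
theorem geomRep_apply_geomRep_inv (w : W) (β : B →₀ ℝ) :
    geomRep cs w (geomRep cs w⁻¹ β) = β := by
  rw [← geomRep_mul_apply, mul_inv_cancel, map_one, LinearEquiv.coe_one, id]

theorem geomRep_mul_simple_simpleRoot (w : W) (s : B) :
    geomRep cs (w * cs.simple s) (simpleRoot s) = -geomRep cs w (simpleRoot s) := by
  rw [geomRep_mul_apply, geomRep_simple, simpleReflection_simpleRoot_self, map_neg]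

theorem geomRep_wordProd_apply_of_notMem {ω : List B} {j : B} (hj : j ∉ ω) (β : B →₀ ℝ) :
    geomRep cs (cs.wordProd ω) β j = β j := by
  induction ω with
  | nil => rw [cs.wordProd_nil, map_one, LinearEquiv.coe_one, id]
  | cons i ω ih =>
    obtain ⟨hji, hjω⟩ := not_or.1 (mt List.mem_cons.2 hj)
    rw [cs.wordProd_cons, geomRep_mul_apply, geomRep_simple, simpleReflection_apply_of_ne M hji,
      ih hjω]

theorem geomRep_inv_simple_mul_apply (w : W) (s : B) (β : B →₀ ℝ) :
    geomRep cs (cs.simple s * w)⁻¹ β = geomRep cs w⁻¹ (simpleReflection M s β) := by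
  rw [mul_inv_rev, cs.inv_simple, geomRep_mul_apply, geomRep_simple]

theorem rootForm_geomRep (w : W) (β γ : B →₀ ℝ) :
    rootForm M (geomRep cs w β) (geomRep cs w γ) = rootForm M β γ := by
  induction w using cs.simple_induction_left with
  | one => simp
  | mul_simple_left w i ih =>
    rw [geomRep_mul_apply, geomRep_mul_apply, geomRep_simple, rootForm_simpleReflection, ih]

theorem exists_geomRep_alternatingWord_eq {s t : B} (hst : s ≠ t) {k : ℕ}
    (hk : M s t = 0 ∨ k + 1 ≤ M s t) :
    ∃ a b : ℝ, 0 ≤ a ∧ 0 ≤ b ∧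
      geomRep cs (cs.wordProd (CoxeterSystem.alternatingWord s t k)) (simpleRoot s) =
        a • simpleRoot s + b • simpleRoot t := by
  have hU (n : ℕ) (hn : n ≤ k + 1) :
      0 ≤ (Chebyshev.U ℝ (n - 1)).eval (Real.cos (Real.pi / M s t)) :=
    chebyshevU_eval_cos_pi_div_nonneg (M.off_diagonal s t hst) (by omega)
  have hts : rootForm M (simpleRoot t) (simpleRoot s) = -2 * Real.cos (Real.pi / M s t) := by
    rw [rootForm_comm, rootForm_simpleRoot_simpleRoot]
  rw [cs.prod_alternatingWord_eq_mul_pow, map_mul, map_pow, map_mul, geomRep_simple,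
    geomRep_simple]
  obtain ⟨j, rfl | rfl⟩ := k.even_or_odd'
  · have hodd := hU (2 * j + 1) le_rfl
    have heven := hU (2 * j) (by omega)
    push_cast at hodd heven
    rw [add_sub_cancel_right] at hodd
    refine ⟨_, _, hodd, heven, ?_⟩
    rw [if_pos (even_two_mul j), map_one, one_mul, Nat.mul_div_cancel_left j two_pos]
    exact reflection_mul_reflection_pow_apply_left _ _ (rootForm_simpleRoot_simpleRoot M s t) hts j
  · have hodd := hU (2 * j + 1) (by omega)
    have heven := hU (2 * j + 1 + 1) le_rfl
    push_cast at hodd heven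
    rw [add_sub_cancel_right] at hodd heven
    refine ⟨_, _, hodd, heven, ?_⟩
    rw [if_neg (Nat.not_even_two_mul_add_one j), geomRep_simple,
      show (2 * j + 1) / 2 = j by omega]
    exact reflection_mul_reflection_pow_apply_left' _ _ (rootForm_simpleRoot_simpleRoot M s t) hts j

theorem not_isRightDescent_of_eq_mul_alternatingWord {v w : W} {s t : B} {k : ℕ}
    (hs : ¬cs.IsRightDescent w s)
    (hw : w = v * cs.wordProd (CoxeterSystem.alternatingWord s t k))
    (hlen : cs.length w = cs.length v + k) :
    ¬cs.IsRightDescent v (if Even k then s else t) := by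
  cases k with
  | zero => simpa [CoxeterSystem.alternatingWord, hw] using hs
  | succ k =>
    have hlast : (if Even (k + 1) then s else t) = if Even k then t else s := by
      simp only [Nat.even_add_one, ite_not]
    rw [CoxeterSystem.alternatingWord_succ', cs.wordProd_cons, ← mul_assoc] at hw
    rw [hlast, cs.not_isRightDescent_iff]
    have hle := cs.length_mul_le (v * cs.simple (if Even k then t else s))
      (cs.wordProd (CoxeterSystem.alternatingWord s t k))
    have hle' := cs.length_wordProd_le (CoxeterSystem.alternatingWord s t k)
    rw [CoxeterSystem.length_alternatingWord] at hle'
    rw [← hw] at hle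
    have := cs.length_mul_simple v (if Even k then t else s)
    omega

-- `v` is the shortest element of the coset `w⟨s, t⟩`.
theorem exists_eq_mul_alternatingWord {w : W} {s t : B} (hs : ¬cs.IsRightDescent w s)
    (ht : cs.IsRightDescent w t) :
    ∃ (v : W) (k : ℕ), w = v * cs.wordProd (CoxeterSystem.alternatingWord s t k) ∧
      cs.length w = cs.length v + k ∧ 0 < k ∧
      ¬cs.IsRightDescent v s ∧ ¬cs.IsRightDescent v t := by
  let IsFactor (n : ℕ) : Prop := ∃ (v : W) (k : ℕ), cs.length v = n ∧
    w = v * cs.wordProd (CoxeterSystem.alternatingWord s t k) ∧ cs.length w = cs.length v + k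
  have hexists : ∃ n, IsFactor n := ⟨_, w, 0, rfl, by simp [CoxeterSystem.alternatingWord], rfl⟩
  classical
  obtain ⟨v, k, hn, hw, hlen⟩ := Nat.find_spec hexists
  have hfirst : ¬cs.IsRightDescent v (if Even k then s else t) :=
    not_isRightDescent_of_eq_mul_alternatingWord cs hs hw hlen
  have hsecond : ¬cs.IsRightDescent v (if Even k then t else s) := by
    intro hdesc
    have hlt := cs.isRightDescent_iff.1 hdesc
    refine Nat.find_min hexists (m := cs.length (v * cs.simple (if Even k then t else s)))
      (by omega) ⟨_, k + 1, rfl, ?_, by omega⟩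
    rw [CoxeterSystem.alternatingWord_succ', cs.wordProd_cons, ← mul_assoc,
      cs.simple_mul_simple_cancel_right, hw]
  have hboth : ¬cs.IsRightDescent v s ∧ ¬cs.IsRightDescent v t := by
    split_ifs at hfirst hsecond
    exacts [⟨hfirst, hsecond⟩, ⟨hsecond, hfirst⟩]
  refine ⟨v, k, hw, hlen, Nat.pos_of_ne_zero ?_, hboth⟩
  rintro rfl
  rw [CoxeterSystem.alternatingWord, cs.wordProd_nil, mul_one] at hw
  exact hboth.2 (hw ▸ ht)

theorem succ_le_of_not_isRightDescent_mul_alternatingWord {v w : W} {s t : B} {k : ℕ}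
    (hs : ¬cs.IsRightDescent w s)
    (hw : w = v * cs.wordProd (CoxeterSystem.alternatingWord s t k))
    (hlen : cs.length w = cs.length v + k) : M s t = 0 ∨ k + 1 ≤ M s t := by
  by_contra! hcon
  have hnot := cs.not_isReduced_alternatingWord t s (m := k + 1)
    (M.symmetric s t ▸ hcon.1) (by rw [M.symmetric]; omega)
  have hle := cs.length_wordProd_le (CoxeterSystem.alternatingWord t s (k + 1))
  rw [CoxeterSystem.IsReduced, CoxeterSystem.length_alternatingWord] at hnot
  rw [CoxeterSystem.length_alternatingWord] at hle
  have hws : w * cs.simple s =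
      v * cs.wordProd (CoxeterSystem.alternatingWord t s (k + 1)) := by
    rw [CoxeterSystem.alternatingWord_succ, cs.wordProd_concat, hw, mul_assoc]
  have hmul := cs.length_mul_le v (cs.wordProd (CoxeterSystem.alternatingWord t s (k + 1)))
  rw [← hws, cs.not_isRightDescent_iff.1 hs] at hmul
  omega

theorem geomRep_simpleRoot_nonneg {w : W} {s : B} (hs : ¬cs.IsRightDescent w s) :
    0 ≤ geomRep cs w (simpleRoot s) := by
  induction hn : cs.length w using Nat.strong_induction_on generalizing w s with
  | _ n ih =>
    obtain rfl | hw1 := eq_or_ne w 1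
    · simpa using simpleRoot_nonneg s
    obtain ⟨t, ht⟩ := cs.exists_rightDescent_of_ne_one hw1
    obtain ⟨v, k, hw, hlen, hk, hvs, hvt⟩ := exists_eq_mul_alternatingWord cs hs ht
    obtain ⟨a, b, ha, hb, hab⟩ := exists_geomRep_alternatingWord_eq cs
      (show s ≠ t by rintro rfl; exact hs ht)
      (succ_le_of_not_isRightDescent_mul_alternatingWord cs hs hw hlen)
    rw [hw, geomRep_mul_apply, hab, map_add, map_smul, map_smul]
    exact add_nonneg (smul_nonneg ha (ih _ (by omega) hvs rfl))
      (smul_nonneg hb (ih _ (by omega) hvt rfl))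

theorem geomRep_simpleRoot_nonpos {w : W} {s : B} (hs : cs.IsRightDescent w s) :
    geomRep cs w (simpleRoot s) ≤ 0 := by
  have h := geomRep_simpleRoot_nonneg cs (cs.isRightDescent_iff_not_isRightDescent_mul.1 hs)
  rwa [geomRep_mul_simple_simpleRoot, neg_nonneg] at h

theorem geomRep_injective : Function.Injective (geomRep cs) := by
  refine (injective_iff_map_eq_one _).2 fun w hw => by_contra fun hne => ?_
  obtain ⟨s, hs⟩ := cs.exists_rightDescent_of_ne_one hne
  have h := geomRep_simpleRoot_nonpos cs hs s
  rw [hw, LinearEquiv.coe_one, id, simpleRoot_apply_self] at h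
  exact absurd h (not_le.2 one_pos)

/-- The roots of a Coxeter system: the images of the simple roots under the group. -/
def IsRoot (β : B →₀ ℝ) : Prop := ∃ w i, geomRep cs w (simpleRoot i) = β

/-- The positive roots: the roots which are nonnegative combinations of simple roots. -/
structure IsPosRoot (β : B →₀ ℝ) : Prop where
  isRoot : IsRoot cs β
  nonneg : 0 ≤ β

variable {cs} {s : B} {β γ : B →₀ ℝ}

theorem isPosRoot_simpleRoot (s : B) : IsPosRoot cs (simpleRoot s) :=
  ⟨⟨1, s, by simp⟩, simpleRoot_nonneg s⟩

theorem IsRoot.geomRep (h : IsRoot cs β) (w : W) : IsRoot cs (geomRep cs w β) := by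
  obtain ⟨v, i, rfl⟩ := h
  exact ⟨w * v, i, geomRep_mul_apply cs w v _⟩

theorem IsRoot.simpleReflection (h : IsRoot cs β) (s : B) : IsRoot cs (simpleReflection M s β) :=
  geomRep_simple cs s ▸ h.geomRep (cs.simple s)

theorem IsRoot.rootForm_self (h : IsRoot cs β) : rootForm M β β = 2 := by
  obtain ⟨v, i, rfl⟩ := h
  rw [rootForm_geomRep, rootForm_simpleRoot_self]

theorem IsRoot.nonneg_or_nonpos (h : IsRoot cs β) : 0 ≤ β ∨ β ≤ 0 := by
  obtain ⟨w, i, rfl⟩ := h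
  by_cases hdesc : cs.IsRightDescent w i
  · exact .inr (geomRep_simpleRoot_nonpos cs hdesc)
  · exact .inl (geomRep_simpleRoot_nonneg cs hdesc)

theorem IsPosRoot.not_nonpos (h : IsPosRoot cs β) : ¬β ≤ 0 := by
  intro hβ
  have h2 := h.isRoot.rootForm_self
  rw [le_antisymm hβ h.nonneg, map_zero] at h2
  simp at h2

theorem IsPosRoot.eq_simpleRoot (h : IsPosRoot cs β) (hs : ∀ j, j ≠ s → β j = 0) :
    β = simpleRoot s := by
  have hβ : β = β s • simpleRoot s := by
    ext j
    obtain rfl | hj := eq_or_ne j s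
    · simp
    · simp [hs j hj, simpleRoot_apply_of_ne hj]
  have h2 := h.isRoot.rootForm_self
  rw [hβ, map_smul, map_smul, LinearMap.smul_apply, rootForm_simpleRoot_self, smul_eq_mul,
    smul_eq_mul] at h2
  have h0 : 0 ≤ β s := h.nonneg s
  have h1 : β s = 1 := by nlinarith
  rw [hβ, h1, one_smul]

theorem IsPosRoot.simpleReflection (h : IsPosRoot cs β) (hs : β ≠ simpleRoot s) :
    IsPosRoot cs (simpleReflection M s β) := by
  refine ⟨h.isRoot.simpleReflection s, ?_⟩
  refine (h.isRoot.simpleReflection s).nonneg_or_nonpos.resolve_right fun hneg => ?_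
  refine hs (h.eq_simpleRoot fun j hj => le_antisymm ?_ (h.nonneg j))
  exact simpleReflection_apply_of_ne M hj β ▸ hneg j

theorem IsPosRoot.simpleReflection_ne (h : IsPosRoot cs β) :
    GeomRep.simpleReflection M s β ≠ simpleRoot s := by
  intro hs
  have hneg : β = -simpleRoot s := by
    rw [← simpleReflection_simpleReflection M s β, hs, simpleReflection_simpleRoot_self]
  exact h.not_nonpos (hneg ▸ neg_nonpos.2 (simpleRoot_nonneg s))

theorem apply_eq_zero_of_smul_add_smul_apply_eq_zero {a b : ℝ} {j : B} (hβ : 0 ≤ β) (hγ : 0 ≤ γ)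
    (ha : 0 < a) (hb : 0 < b) (h : (a • β + b • γ) j = 0) : β j = 0 := by
  have h' : a * β j + b * γ j = 0 := h
  have hβj : 0 ≤ a * β j := mul_nonneg ha.le (hβ j)
  have hγj : 0 ≤ b * γ j := mul_nonneg hb.le (hγ j)
  exact (mul_eq_zero.1 (by linarith)).resolve_left ha.ne'

theorem IsPosRoot.eq_simpleRoot_of_smul_add_smul_eq {a b : ℝ} (hβ : IsPosRoot cs β)
    (hγ : IsPosRoot cs γ) (ha : 0 < a) (hb : 0 < b) (h : a • β + b • γ = simpleRoot s) :
    β = simpleRoot s :=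
  hβ.eq_simpleRoot fun j hj =>
    apply_eq_zero_of_smul_add_smul_apply_eq_zero hβ.nonneg hγ.nonneg ha hb
      (by rw [h, simpleRoot_apply_of_ne hj])

theorem geomRep_conj_simple_apply (w : W) (s : B) (γ : B →₀ ℝ) :
    geomRep cs (w * cs.simple s * w⁻¹) γ =
      γ - rootForm M (geomRep cs w (simpleRoot s)) γ • geomRep cs w (simpleRoot s) := by
  rw [geomRep_mul_apply, geomRep_mul_apply, geomRep_simple, simpleReflection_apply, map_sub,
    map_smul, ← rootForm_geomRep cs w, geomRep_apply_geomRep_inv]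

theorem conj_simple_eq_conj_simple {w v : W} {s r : B}
    (h : geomRep cs w (simpleRoot s) = geomRep cs v (simpleRoot r)) :
    w * cs.simple s * w⁻¹ = v * cs.simple r * v⁻¹ :=
  geomRep_injective cs <| LinearEquiv.ext fun γ => by
    rw [geomRep_conj_simple_apply, geomRep_conj_simple_apply, h]

theorem exists_eq_conj_simple {t : W} (ht : cs.IsReflection t) :
    ∃ w s, t = w * cs.simple s * w⁻¹ ∧ IsPosRoot cs (geomRep cs w (simpleRoot s)) := by
  obtain ⟨w, s, rfl⟩ := ht
  obtain h | h := IsRoot.nonneg_or_nonpos (cs := cs) ⟨w, s, rfl⟩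
  · exact ⟨w, s, rfl, ⟨w, s, rfl⟩, h⟩
  · refine ⟨w * cs.simple s, s, by simp [mul_assoc], ⟨_, s, rfl⟩, ?_⟩
    rwa [geomRep_mul_simple_simpleRoot, neg_nonneg]

variable (cs) in
/-- The inversions of `w` as positive roots: `β` is an inversion iff the reflection in `β` belongs
to `leftInvSet cs w`, see `conj_simple_mem_leftInvSet_iff`. -/
def invRoots (w : W) : Set (B →₀ ℝ) := {β | IsPosRoot cs β ∧ geomRep cs w⁻¹ β ≤ 0}

theorem invRoots_one : invRoots cs 1 = ∅ := by
  refine Set.eq_empty_of_forall_notMem fun β hβ => hβ.1.not_nonpos ?_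
  simpa using hβ.2

theorem simpleRoot_mem_invRoots_iff {w : W} :
    simpleRoot s ∈ invRoots cs w ↔ cs.IsLeftDescent w s := by
  rw [← cs.isRightDescent_inv_iff]
  refine ⟨fun h => by_contra fun hdesc => ?_, fun h =>
    ⟨isPosRoot_simpleRoot s, geomRep_simpleRoot_nonpos cs h⟩⟩
  have hpos : IsPosRoot cs (geomRep cs w⁻¹ (simpleRoot s)) :=
    ⟨⟨_, s, rfl⟩, geomRep_simpleRoot_nonneg cs hdesc⟩
  exact hpos.not_nonpos h.2

theorem mem_invRoots_simple_mul_iff {w : W} (hβ : IsPosRoot cs β) (hs : β ≠ simpleRoot s) :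
    β ∈ invRoots cs (cs.simple s * w) ↔ simpleReflection M s β ∈ invRoots cs w := by
  simp only [invRoots, Set.mem_ofPred_eq, geomRep_inv_simple_mul_apply, hβ,
    hβ.simpleReflection hs, true_and]

theorem smul_add_smul_mem_invRoots {w : W} {a b : ℝ} (hβ : β ∈ invRoots cs w)
    (hγ : γ ∈ invRoots cs w) (ha : 0 < a) (hb : 0 < b) (h : IsRoot cs (a • β + b • γ)) :
    a • β + b • γ ∈ invRoots cs w := by
  refine ⟨⟨h, add_nonneg (smul_nonneg ha.le hβ.1.nonneg) (smul_nonneg hb.le hγ.1.nonneg)⟩, ?_⟩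
  rw [map_add, map_smul, map_smul]
  exact add_nonpos (smul_nonpos_of_nonneg_of_nonpos ha.le hβ.2)
    (smul_nonpos_of_nonneg_of_nonpos hb.le hγ.2)

theorem invRoots_finite (w : W) : (invRoots cs w).Finite := by
  induction w using cs.simple_induction_left with
  | one => exact invRoots_one (cs := cs) ▸ Set.finite_empty
  | mul_simple_left w s ih =>
    refine ((ih.image (simpleReflection M s)).insert (simpleRoot s)).subset fun β hβ => ?_
    refine or_iff_not_imp_left.2 fun hs => ?_
    exact ⟨_, (mem_invRoots_simple_mul_iff hβ.1 hs).1 hβ, simpleReflection_simpleReflection M s β⟩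

theorem conj_simple_mem_leftInvSet_of_mem_invRoots {x w : W}
    (h : geomRep cs w (simpleRoot s) ∈ invRoots cs x) :
    w * cs.simple s * w⁻¹ ∈ leftInvSet cs x := by
  refine ⟨⟨w, s, rfl⟩, ?_⟩
  induction hn : cs.length x using Nat.strong_induction_on generalizing x w with
  | _ n ih =>
    subst hn
    have hx1 : x ≠ 1 := by
      rintro rfl
      simp [invRoots_one] at h
    obtain ⟨r, hr⟩ := cs.exists_leftDescent_of_ne_one hx1
    obtain hwr | hwr := eq_or_ne (geomRep cs w (simpleRoot s)) (simpleRoot r)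
    · have : w * cs.simple s * w⁻¹ = cs.simple r := by
        simpa using conj_simple_eq_conj_simple (cs := cs) (v := 1) (r := r) (by simpa using hwr)
      rwa [this]
    have hinv : geomRep cs (cs.simple r * w) (simpleRoot s) ∈ invRoots cs (cs.simple r * x) := by
      rw [geomRep_mul_apply, geomRep_simple, ← mem_invRoots_simple_mul_iff h.1 hwr]
      rwa [cs.simple_mul_simple_cancel_left]
    have hlt := ih _ hr hinv rfl
    have hle := cs.length_mul_le (cs.simple r)
      (cs.simple r * w * cs.simple s * (cs.simple r * w)⁻¹ * (cs.simple r * x))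
    rw [show cs.simple r * (cs.simple r * w * cs.simple s * (cs.simple r * w)⁻¹ *
      (cs.simple r * x)) = w * cs.simple s * w⁻¹ * x by simp [mul_assoc], cs.length_simple] at hle
    have := cs.isLeftDescent_iff.1 hr
    omega

theorem conj_simple_mem_leftInvSet_iff {x w : W} (h : IsPosRoot cs (geomRep cs w (simpleRoot s))) :
    w * cs.simple s * w⁻¹ ∈ leftInvSet cs x ↔ geomRep cs w (simpleRoot s) ∈ invRoots cs x := by
  refine ⟨fun ht => by_contra fun hx => ?_, conj_simple_mem_leftInvSet_of_mem_invRoots⟩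
  have hpos : 0 ≤ geomRep cs x⁻¹ (geomRep cs w (simpleRoot s)) :=
    (h.isRoot.geomRep x⁻¹).nonneg_or_nonpos.resolve_right fun hneg => hx ⟨h, hneg⟩
  have hinv : geomRep cs w (simpleRoot s) ∈ invRoots cs (w * cs.simple s * w⁻¹ * x) := by
    refine ⟨h, ?_⟩
    rw [show (w * cs.simple s * w⁻¹ * x)⁻¹ = x⁻¹ * (w * cs.simple s * w⁻¹) by simp [mul_assoc],
      geomRep_mul_apply, geomRep_conj_simple_apply, h.isRoot.rootForm_self, two_smul,
      sub_add_cancel_left, map_neg]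
    exact neg_nonpos.2 hpos
  have hlt := (conj_simple_mem_leftInvSet_of_mem_invRoots hinv).2
  rw [show w * cs.simple s * w⁻¹ * (w * cs.simple s * w⁻¹ * x) = x by simp [mul_assoc]] at hlt
  exact hlt.asymm ht.2

theorem leftInvSet_eq_inter_of_invRoots_eq_inter {x x' z : W}
    (h : invRoots cs z = invRoots cs x ∩ invRoots cs x') :
    leftInvSet cs z = leftInvSet cs x ∩ leftInvSet cs x' := by
  have mem_iff (t : W) (ht : cs.IsReflection t) :
      t ∈ leftInvSet cs z ↔ t ∈ leftInvSet cs x ∩ leftInvSet cs x' := by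
    obtain ⟨w, s, rfl, hpos⟩ := exists_eq_conj_simple ht
    simp only [Set.mem_inter_iff, conj_simple_mem_leftInvSet_iff hpos, h]
  exact Set.ext fun t => ⟨fun ht => (mem_iff t ht.1).1 ht, fun ht => (mem_iff t ht.1.1).2 ht⟩

variable (cs) in
/-- Biclosed sets of positive roots, where closedness refers to positive real combinations of two
roots. The finite ones are exactly the inversion sets. -/
structure IsBiclosed (A : Set (B →₀ ℝ)) : Prop where
  isPosRoot : ∀ β ∈ A, IsPosRoot cs β
  closed : ∀ ⦃β γ : B →₀ ℝ⦄ ⦃a b : ℝ⦄, β ∈ A → γ ∈ A → 0 < a → 0 < b →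
    IsRoot cs (a • β + b • γ) → a • β + b • γ ∈ A
  coclosed : ∀ ⦃β γ : B →₀ ℝ⦄ ⦃a b : ℝ⦄, IsPosRoot cs β → IsPosRoot cs γ → 0 < a → 0 < b →
    a • β + b • γ ∈ A → β ∈ A ∨ γ ∈ A

theorem IsPosRoot.exists_rootForm_simpleRoot_pos (h : IsPosRoot cs β) :
    ∃ s, 0 < rootForm M (simpleRoot s) β := by
  by_contra! hcon
  have hle : rootForm M β β ≤ 0 := by
    rw [rootForm_eq_sum]
    exact Finset.sum_nonpos fun i _ => mul_nonpos_of_nonneg_of_nonpos (h.nonneg i) (hcon i)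
  rw [h.isRoot.rootForm_self] at hle
  exact absurd hle (not_le.2 two_pos)

theorem IsBiclosed.exists_simpleRoot_mem {A : Set (B →₀ ℝ)} (hA : IsBiclosed cs A)
    (hfin : A.Finite) (hne : A.Nonempty) : ∃ s, simpleRoot s ∈ A := by
  obtain ⟨δ, hδ, hmin⟩ := Set.exists_min_image A Finsupp.degree hfin hne
  have hpos := hA.isPosRoot δ hδ
  obtain ⟨s, hs⟩ := hpos.exists_rootForm_simpleRoot_pos
  refine ⟨s, ?_⟩
  obtain rfl | hδs := eq_or_ne δ (simpleRoot s)
  · exact hδ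
  have hdecomp : δ =
      (1 : ℝ) • simpleReflection M s δ + rootForm M (simpleRoot s) δ • simpleRoot s := by
    rw [simpleReflection_apply]
    module
  have hdeg : Finsupp.degree δ =
      Finsupp.degree (simpleReflection M s δ) + rootForm M (simpleRoot s) δ := by
    conv_lhs => rw [hdecomp]
    rw [one_smul, map_add, simpleRoot, Finsupp.smul_single, Finsupp.degree_single, smul_eq_mul,
      mul_one]
  refine (hA.coclosed (hpos.simpleReflection hδs) (isPosRoot_simpleRoot s) one_pos hs
    (hdecomp ▸ hδ)).resolve_left fun hmem => ?_
  have := hmin _ hmem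
  linarith

theorem IsBiclosed.simpleReflection_mem {A : Set (B →₀ ℝ)} (hA : IsBiclosed cs A)
    (hs : simpleRoot s ∈ A) (hγ : IsRoot cs γ) {a b : ℝ} (ha : 0 < a) (hb : 0 < b)
    (h : simpleReflection M s (a • simpleRoot s + b • γ) ∈ A) : simpleReflection M s γ ∈ A := by
  have hcomb : simpleReflection M s γ =
      b⁻¹ • simpleReflection M s (a • simpleRoot s + b • γ) + (b⁻¹ * a) • simpleRoot s := by
    rw [map_add, map_smul, map_smul, simpleReflection_simpleRoot_self]
    match_scalars <;> field_simp
    ring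
  have hroot := hγ.simpleReflection s
  rw [hcomb] at hroot ⊢
  exact hA.closed h hs (by positivity) (by positivity) hroot

theorem IsBiclosed.preimage_simpleReflection {A : Set (B →₀ ℝ)} (hA : IsBiclosed cs A)
    (hs : simpleRoot s ∈ A) : IsBiclosed cs {β | IsPosRoot cs β ∧ simpleReflection M s β ∈ A} where
  isPosRoot β hβ := hβ.1
  closed β γ a b hβ hγ ha hb h := by
    refine ⟨⟨h, add_nonneg (smul_nonneg ha.le hβ.1.nonneg) (smul_nonneg hb.le hγ.1.nonneg)⟩, ?_⟩
    have hroot := h.simpleReflection s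
    rw [map_add, map_smul, map_smul] at hroot ⊢
    exact hA.closed hβ.2 hγ.2 ha hb hroot
  coclosed β γ a b hβ hγ ha hb h := by
    obtain rfl | hβs := eq_or_ne β (simpleRoot s)
    · exact .inr ⟨hγ, hA.simpleReflection_mem hs hγ.isRoot ha hb h.2⟩
    obtain rfl | hγs := eq_or_ne γ (simpleRoot s)
    · exact .inl ⟨hβ, hA.simpleReflection_mem hs hβ.isRoot hb ha (add_comm (a • β) _ ▸ h.2)⟩
    have hmem := h.2
    rw [map_add, map_smul, map_smul] at hmem
    exact (hA.coclosed (hβ.simpleReflection hβs) (hγ.simpleReflection hγs) ha hb hmem).imp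
      (And.intro hβ) (And.intro hγ)

theorem preimage_simpleReflection_eq {A : Set (B →₀ ℝ)} (hA : ∀ β ∈ A, IsPosRoot cs β) (s : B) :
    {β | IsPosRoot cs β ∧ simpleReflection M s β ∈ A} =
      simpleReflection M s '' (A \ {simpleRoot s}) := by
  ext β
  refine ⟨fun hβ => ⟨_, ⟨hβ.2, hβ.1.simpleReflection_ne⟩, simpleReflection_simpleReflection M s β⟩,
    ?_⟩
  rintro ⟨γ, ⟨hγ, hγs⟩, rfl⟩
  exact ⟨(hA γ hγ).simpleReflection hγs, by rwa [simpleReflection_simpleReflection]⟩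

theorem invRoots_simple_mul_eq {A : Set (B →₀ ℝ)} (hA : ∀ β ∈ A, IsPosRoot cs β)
    (hs : simpleRoot s ∈ A) {z : W}
    (hz : invRoots cs z = {β | IsPosRoot cs β ∧ simpleReflection M s β ∈ A}) :
    invRoots cs (cs.simple s * z) = A := by
  have hdesc : cs.IsLeftDescent (cs.simple s * z) s := by
    rw [cs.isLeftDescent_iff_not_isLeftDescent_mul, cs.simple_mul_simple_cancel_left,
      ← simpleRoot_mem_invRoots_iff, hz]
    rintro ⟨-, hneg⟩
    rw [simpleReflection_simpleRoot_self] at hneg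
    simpa [simpleReflection_simpleRoot_self] using (hA _ hneg).simpleReflection_ne (s := s)
  have mem_iff (β : B →₀ ℝ) (hβ : IsPosRoot cs β) : β ∈ invRoots cs (cs.simple s * z) ↔ β ∈ A := by
    obtain rfl | hβs := eq_or_ne β (simpleRoot s)
    · simp only [hs, simpleRoot_mem_invRoots_iff, hdesc]
    · rw [mem_invRoots_simple_mul_iff hβ hβs, hz, Set.mem_ofPred_eq,
        simpleReflection_simpleReflection, and_iff_right (hβ.simpleReflection hβs)]
  exact Set.ext fun β => ⟨fun h => (mem_iff β h.1).1 h, fun h => (mem_iff β (hA β h)).2 h⟩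

theorem IsBiclosed.exists_invRoots_eq {A : Set (B →₀ ℝ)} (hA : IsBiclosed cs A)
    (hfin : A.Finite) : ∃ z, invRoots cs z = A := by
  induction hn : A.ncard generalizing A with
  | zero => exact ⟨1, by rw [invRoots_one, (Set.ncard_eq_zero hfin).1 hn]⟩
  | succ n ih =>
    obtain ⟨s, hs⟩ := hA.exists_simpleRoot_mem hfin (Set.nonempty_of_ncard_ne_zero (by omega))
    obtain ⟨z, hz⟩ := ih (hA.preimage_simpleReflection hs)
      (preimage_simpleReflection_eq hA.isPosRoot s ▸ hfin.sdiff.image _) (by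
        rw [preimage_simpleReflection_eq hA.isPosRoot s,
          Set.ncard_image_of_injective _ (simpleReflection M s).injective,
          Set.ncard_sdiff_singleton_of_mem hs, hn, Nat.add_sub_cancel])
    exact ⟨cs.simple s * z, invRoots_simple_mul_eq hA.isPosRoot hs hz⟩

end Rep

section SkewForm

variable {B : Type*} [DecidableEq B] (M : CoxeterMatrix B)

/-- The skew-symmetric form `ω_c` of the Coxeter element `c = s₁ ⋯ sₙ` given by the word
`l = [s₁, …, sₙ]`, namely `ω_c(β, γ) = ∑_{i < j} ⟨αᵢ, αⱼ⟩ (γᵢ βⱼ - βᵢ γⱼ)`. -/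
noncomputable def skewForm : List B → (B →₀ ℝ) → (B →₀ ℝ) → ℝ
  | [], _, _ => 0
  | s :: l, β, γ => γ s * rootForm M (simpleRoot s) (β.filter (· ∈ l)) -
      β s * rootForm M (simpleRoot s) (γ.filter (· ∈ l)) + skewForm l β γ

variable {M} {s : B} {l : List B}

theorem filter_mem_eq_add {l' : List B} (hs : s ∉ l) (hl' : ∀ i, i ∈ l' ↔ i = s ∨ i ∈ l)
    (β : B →₀ ℝ) : β.filter (· ∈ l') = β.filter (· ∈ l) + β s • simpleRoot s := by
  ext i
  obtain rfl | hi := eq_or_ne i s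
  · simp [hs, hl']
  · simp [Finsupp.filter_apply, hi, hl', simpleRoot_apply_of_ne hi]

theorem skewForm_swap (l : List B) (β γ : B →₀ ℝ) : skewForm M l γ β = -skewForm M l β γ := by
  induction l with
  | nil => exact neg_zero.symm
  | cons s l ih =>
    rw [skewForm, skewForm, ih]
    ring

theorem filter_mem_congr {β β' : B →₀ ℝ} (h : ∀ j ∈ l, β j = β' j) :
    β.filter (· ∈ l) = β'.filter (· ∈ l) := by
  ext i
  by_cases hi : i ∈ l
  · simp [hi, h i hi]
  · simp [hi]

theorem skewForm_congr {β β' γ γ' : B →₀ ℝ} (hβ : ∀ j ∈ l, β j = β' j)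
    (hγ : ∀ j ∈ l, γ j = γ' j) : skewForm M l β γ = skewForm M l β' γ' := by
  induction l with
  | nil => rfl
  | cons s l ih =>
    rw [List.forall_mem_cons] at hβ hγ
    rw [skewForm, skewForm, ih hβ.2 hγ.2, hβ.1, hγ.1, filter_mem_congr hβ.2, filter_mem_congr hγ.2]

theorem skewForm_eq_zero {β γ : B →₀ ℝ} (h : ∀ j ∈ l, γ j = 0) : skewForm M l β γ = 0 := by
  induction l with
  | nil => rfl
  | cons s l ih =>
    rw [List.forall_mem_cons] at h
    rw [skewForm, ih h.2, h.1, Finsupp.filter_eq_zero_iff _ _ |>.2 h.2, map_zero]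
    ring

theorem skewForm_cons_simpleRoot (hs : s ∉ l) (β : B →₀ ℝ) :
    skewForm M (s :: l) β (simpleRoot s) = rootForm M (simpleRoot s) (β.filter (· ∈ l)) := by
  have hzero : ∀ j ∈ l, simpleRoot s j = 0 := fun j hj =>
    simpleRoot_apply_of_ne (ne_of_mem_of_not_mem hj hs)
  rw [skewForm, skewForm_eq_zero hzero, Finsupp.filter_eq_zero_iff _ _ |>.2 hzero, map_zero,
    simpleRoot_apply_self]
  ring

theorem skewForm_append_singleton (hl : (s :: l).Nodup) (β γ : B →₀ ℝ) :
    skewForm M (l ++ [s]) β γ = skewForm M l β γ -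
      (γ s * rootForm M (simpleRoot s) (β.filter (· ∈ l)) -
        β s * rootForm M (simpleRoot s) (γ.filter (· ∈ l))) := by
  induction l with
  | nil =>
    simp only [List.nil_append, skewForm, List.not_mem_nil,
      (Finsupp.filter_eq_zero_iff (fun _ : B => False) _).2 fun _ => False.elim, map_zero]
    ring
  | cons t l ih =>
    obtain ⟨-, hs, htl, hlnd⟩ : s ≠ t ∧ s ∉ l ∧ t ∉ l ∧ l.Nodup := by
      simpa [and_assoc] using hl
    have happend (δ : B →₀ ℝ) := filter_mem_eq_add (l' := l ++ [s]) hs (by simp [or_comm]) δ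
    have hcons (δ : B →₀ ℝ) := filter_mem_eq_add (l' := t :: l) htl (by simp) δ
    rw [List.cons_append, skewForm, skewForm, ih (List.nodup_cons.2 ⟨hs, hlnd⟩), happend, happend,
      hcons, hcons]
    simp only [map_add, map_smul, smul_eq_mul, rootForm_comm M (simpleRoot s) (simpleRoot t)]
    ring

theorem rootForm_simpleRoot_eq_add (hs : s ∉ l) {β : B →₀ ℝ} (hβ : ∀ i, i ∉ s :: l → β i = 0) :
    rootForm M (simpleRoot s) β = rootForm M (simpleRoot s) (β.filter (· ∈ l)) + 2 * β s := by
  have hself : β.filter (· ∈ s :: l) = β :=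
    Finsupp.filter_eq_self_iff _ _ |>.2 fun i hi => by_contra fun hil => hi (hβ i hil)
  conv_lhs => rw [← hself, filter_mem_eq_add hs (fun _ => List.mem_cons)]
  rw [map_add, map_smul, rootForm_simpleRoot_self, smul_eq_mul, mul_comm (2 : ℝ)]

theorem skewForm_rotate (hl : (s :: l).Nodup) {β γ : B →₀ ℝ} (hβ : ∀ i, i ∉ s :: l → β i = 0)
    (hγ : ∀ i, i ∉ s :: l → γ i = 0) :
    skewForm M (l ++ [s]) (simpleReflection M s β) (simpleReflection M s γ) =
      skewForm M (s :: l) β γ := by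
  have hs : s ∉ l := (List.nodup_cons.1 hl).1
  have hcongr (δ : B →₀ ℝ) : ∀ j ∈ l, simpleReflection M s δ j = δ j := fun j hj =>
    simpleReflection_apply_of_ne M (ne_of_mem_of_not_mem hj hs) δ
  rw [skewForm_append_singleton hl, skewForm, skewForm_congr (hcongr β) (hcongr γ),
    filter_mem_congr (hcongr β), filter_mem_congr (hcongr γ), simpleReflection_apply_self,
    simpleReflection_apply_self, rootForm_simpleRoot_eq_add hs hβ,
    rootForm_simpleRoot_eq_add hs hγ]
  ring

end SkewForm

section Aligned

variable {B W : Type*} [DecidableEq B] [Group W] {M : CoxeterMatrix B} {cs : CoxeterSystem M W}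
  {s : B} {l : List B}

variable (cs) in
/-- A set `A` of roots is aligned with the Coxeter element given by `l` if, whenever `A` contains a
root inside a rank two subsystem, it contains the roots preceding it there, where the sign of
`skewForm M l` decides which of the two directions is first. -/
def IsAligned (l : List B) (A : Set (B →₀ ℝ)) : Prop :=
  ∀ ⦃β γ : B →₀ ℝ⦄ ⦃a b : ℝ⦄, IsPosRoot cs β → IsPosRoot cs γ → 0 < a → 0 < b →
    a • β + b • γ ∈ A → 0 ≤ skewForm M l β γ → β ∈ A

theorem IsAligned.cons {A : Set (B →₀ ℝ)} (hA : IsAligned cs l A) (hs : ∀ δ ∈ A, δ s = 0) :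
    IsAligned cs (s :: l) A := by
  intro β γ a b hβ hγ ha hb hmem hω
  have hβs := apply_eq_zero_of_smul_add_smul_apply_eq_zero hβ.nonneg hγ.nonneg ha hb (hs _ hmem)
  have hγs := apply_eq_zero_of_smul_add_smul_apply_eq_zero hγ.nonneg hβ.nonneg hb ha
    (hs _ (add_comm (a • β) _ ▸ hmem))
  rw [skewForm, hβs, hγs, zero_mul, zero_mul, sub_zero, zero_add] at hω
  exact hA hβ hγ ha hb hmem hω

theorem skewForm_simpleRoot_neg (hs : s ∉ l) {β : B →₀ ℝ} {a b : ℝ} (hβ : IsPosRoot cs β)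
    (hβs : β ≠ simpleRoot s) (hsupp : ∀ i, i ∉ s :: l → β i = 0) (ha : 0 < a) (hb : 0 < b)
    (hroot : IsRoot cs (a • β + b • simpleRoot s)) :
    skewForm M (s :: l) β (simpleRoot s) < 0 := by
  have hpos : IsPosRoot cs (a • β + b • simpleRoot s) :=
    ⟨hroot, add_nonneg (smul_nonneg ha.le hβ.nonneg) (smul_nonneg hb.le (simpleRoot_nonneg s))⟩
  have hne : a • β + b • simpleRoot s ≠ simpleRoot s := fun h =>
    hβs (hβ.eq_simpleRoot_of_smul_add_smul_eq (isPosRoot_simpleRoot s) ha hb h)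
  have hcoord : 0 ≤ a * (β s - rootForm M (simpleRoot s) β) - b := by
    have h := (hpos.simpleReflection hne).nonneg s
    rwa [map_add, map_smul, map_smul, simpleReflection_simpleRoot_self, Finsupp.add_apply,
      Finsupp.smul_apply, Finsupp.smul_apply, Finsupp.neg_apply, simpleRoot_apply_self,
      simpleReflection_apply_self, smul_eq_mul, smul_eq_mul, mul_neg_one, ← sub_eq_add_neg] at h
  have hlt : 0 < β s - rootForm M (simpleRoot s) β :=
    pos_of_mul_pos_right (hb.trans_le (sub_nonneg.1 hcoord)) ha.le
  rw [rootForm_simpleRoot_eq_add hs hsupp] at hlt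
  have hβ0 : 0 ≤ β s := hβ.nonneg s
  rw [skewForm_cons_simpleRoot hs]
  linarith

theorem IsAligned.simple_mul {y : W} (hl : (s :: l).Nodup) (hy : ¬cs.IsLeftDescent y s)
    (hA : IsAligned cs (l ++ [s]) (invRoots cs y))
    (hsupp : ∀ δ ∈ invRoots cs (cs.simple s * y), ∀ i, i ∉ s :: l → δ i = 0) :
    IsAligned cs (s :: l) (invRoots cs (cs.simple s * y)) := by
  intro β γ a b hβ hγ ha hb hmem hω
  obtain rfl | hβs := eq_or_ne β (simpleRoot s)
  · rwa [simpleRoot_mem_invRoots_iff, cs.isLeftDescent_iff_not_isLeftDescent_mul,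
      cs.simple_mul_simple_cancel_left]
  have hβsupp (i : B) (hi : i ∉ s :: l) : β i = 0 :=
    apply_eq_zero_of_smul_add_smul_apply_eq_zero hβ.nonneg hγ.nonneg ha hb (hsupp _ hmem i hi)
  have hγsupp (i : B) (hi : i ∉ s :: l) : γ i = 0 :=
    apply_eq_zero_of_smul_add_smul_apply_eq_zero hγ.nonneg hβ.nonneg hb ha
      (add_comm (a • β) _ ▸ hsupp _ hmem i hi)
  have hγs : γ ≠ simpleRoot s := by
    rintro rfl
    exact hω.not_gt
      (skewForm_simpleRoot_neg (List.nodup_cons.1 hl).1 hβ hβs hβsupp ha hb hmem.1.isRoot)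
  have hne : a • β + b • γ ≠ simpleRoot s := fun h =>
    hβs (hβ.eq_simpleRoot_of_smul_add_smul_eq hγ ha hb h)
  rw [mem_invRoots_simple_mul_iff hmem.1 hne, map_add, map_smul, map_smul] at hmem
  rw [mem_invRoots_simple_mul_iff hβ hβs]
  exact hA (hβ.simpleReflection hβs) (hγ.simpleReflection hγs) ha hb hmem
    (by rwa [skewForm_rotate hl hβsupp hγsupp])

theorem IsAligned.isBiclosed_invRoots_inter {x x' : W} (hx : IsAligned cs l (invRoots cs x))
    (hx' : IsAligned cs l (invRoots cs x')) :
    IsBiclosed cs (invRoots cs x ∩ invRoots cs x') where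
  isPosRoot β hβ := hβ.1.1
  closed β γ a b hβ hγ ha hb h :=
    ⟨smul_add_smul_mem_invRoots hβ.1 hγ.1 ha hb h, smul_add_smul_mem_invRoots hβ.2 hγ.2 ha hb h⟩
  coclosed β γ a b hβ hγ ha hb h := by
    obtain hω | hω := le_total 0 (skewForm M l β γ)
    · exact .inl ⟨hx hβ hγ ha hb h.1 hω, hx' hβ hγ ha hb h.2 hω⟩
    · rw [add_comm] at h
      rw [← neg_nonneg, ← skewForm_swap] at hω
      exact .inr ⟨hx hγ hβ hb ha h.1 hω, hx' hγ hβ hb ha h.2 hω⟩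

end Aligned

end GeomRep

namespace CSortable

open GeomRep

variable {B : Type*} {s : B} {l : List B}

theorem notMem_of_isChain {k : Finset B} {K : List (Finset B)}
    (hK : (k :: K).IsChain fun a b => b ⊆ a) (hs : s ∉ k) : ∀ k' ∈ k :: K, s ∉ k' := by
  have : IsTrans (Finset B) fun a b => b ⊆ a := ⟨fun _ _ _ hab hbc => hbc.trans hab⟩
  have hsub := (List.pairwise_cons.1 (List.isChain_iff_pairwise.1 hK)).1
  exact List.forall_mem_cons.2 ⟨hs, fun k' hk' hsk' => hs (hsub k' hk' hsk')⟩

variable [DecidableEq B]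

/-- The word `c_{K₁} c_{K₂} ⋯` in the definition of `CSortable`. -/
def sortingWord (l : List B) (K : List (Finset B)) : List B :=
  (K.map fun k => l.filter (· ∈ k)).flatten

theorem sortingWord_cons (l : List B) (k : Finset B) (K : List (Finset B)) :
    sortingWord l (k :: K) = l.filter (· ∈ k) ++ sortingWord l K := by
  rw [sortingWord, List.map_cons, List.flatten_cons, sortingWord]

theorem mem_of_mem_sortingWord {K : List (Finset B)} {i : B} (hi : i ∈ sortingWord l K) :
    i ∈ l := by
  obtain ⟨_, hk, hi⟩ := List.mem_flatten.1 hi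
  obtain ⟨k, -, rfl⟩ := List.mem_map.1 hk
  exact List.mem_of_mem_filter hi

theorem sortingWord_append_cons_of_notMem {K : List (Finset B)} (h : ∀ k ∈ K, s ∉ k)
    (l₁ l₂ : List B) : sortingWord (l₁ ++ s :: l₂) K = sortingWord (l₁ ++ l₂) K :=
  congrArg List.flatten <| List.map_congr_left fun k hk => by simp [h k hk]

theorem filter_mem_erase (hs : s ∉ l) (k : Finset B) :
    l.filter (· ∈ k.erase s) = l.filter (· ∈ k) :=
  List.filter_congr fun b hb => by simp [ne_of_mem_of_not_mem hb hs]

theorem filter_mem_cons_eq (hs : s ∉ l) {k : Finset B} (hk : s ∈ k) :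
    (s :: l).filter (· ∈ k) = s :: (l ++ [s]).filter (· ∈ k.erase s) := by
  rw [List.filter_cons_of_pos (by simpa using hk), List.filter_append, filter_mem_erase hs]
  simp

-- The new sets are `kᵢ \ {s} ∪ (kᵢ₊₁ ∩ {s})`: each `s` is moved to the end of the previous copy
-- of `l`. As the sets decrease, this erases `s` from the last set containing it.
theorem exists_sortingWord_cons_eq (hs : s ∉ l) {k : Finset B} {K : List (Finset B)}
    (hK : (k :: K).IsChain fun a b => b ⊆ a) (hk : s ∈ k) :
    ∃ (k' : Finset B) (K' : List (Finset B)), ((k' :: K').IsChain fun a b => b ⊆ a) ∧ k' ⊆ k ∧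
      sortingWord (s :: l) (k :: K) = s :: sortingWord (l ++ [s]) (k' :: K') := by
  induction K generalizing k with
  | nil =>
    refine ⟨k.erase s, [], .singleton _, Finset.erase_subset s k, ?_⟩
    rw [sortingWord_cons, filter_mem_cons_eq hs hk, sortingWord_cons _ (k.erase s)]
    rfl
  | cons k₂ K ih =>
    obtain ⟨hk₂, hK₂⟩ := List.isChain_cons_cons.1 hK
    by_cases hsk₂ : s ∈ k₂
    · obtain ⟨k', K', hK', hk', hword⟩ := ih hK₂ hsk₂
      refine ⟨k, k' :: K', List.isChain_cons_cons.2 ⟨hk'.trans hk₂, hK'⟩, subset_rfl, ?_⟩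
      rw [sortingWord_cons, hword, sortingWord_cons _ k]
      simp [List.filter_append, hk]
    · refine ⟨k.erase s, k₂ :: K, List.isChain_cons_cons.2
        ⟨Finset.subset_erase.2 ⟨hk₂, hsk₂⟩, hK₂⟩, Finset.erase_subset s k, ?_⟩
      have hdrop := sortingWord_append_cons_of_notMem (notMem_of_isChain hK₂ hsk₂)
      have hdrop_first : sortingWord (s :: l) (k₂ :: K) = sortingWord l (k₂ :: K) := hdrop [] l
      rw [sortingWord_cons, filter_mem_cons_eq hs hk, sortingWord_cons _ (k.erase s), hdrop_first,
        hdrop l [], List.append_nil, List.cons_append]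

variable {W : Type*} [Group W] {M : CoxeterMatrix B} {cs : CoxeterSystem M W} {x : W}

theorem cons_cases (hx : CSortable cs (s :: l) x) (hs : s ∉ l) :
    CSortable cs l x ∨
      ∃ y, x = cs.simple s * y ∧ ¬cs.IsLeftDescent y s ∧ CSortable cs (l ++ [s]) y := by
  obtain ⟨K, hK, rfl, hlen⟩ := hx
  change cs.length (cs.wordProd (sortingWord (s :: l) K)) = (sortingWord (s :: l) K).length at hlen
  by_cases hall : ∀ k ∈ K, s ∉ k
  · have hdrop : sortingWord (s :: l) K = sortingWord l K :=
      sortingWord_append_cons_of_notMem hall [] l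
    refine .inl ⟨K, hK, congrArg cs.wordProd hdrop.symm, ?_⟩
    change cs.length (cs.wordProd (sortingWord (s :: l) K)) = (sortingWord l K).length
    rw [hlen, hdrop]
  obtain _ | ⟨k, K⟩ := K
  · simp at hall
  have hk : s ∈ k := by_contra fun hk => hall (notMem_of_isChain hK hk)
  obtain ⟨k', K', hK', -, hword⟩ := exists_sortingWord_cons_eq hs hK hk
  have hle := cs.length_wordProd_le (sortingWord (l ++ [s]) (k' :: K'))
  have hsimple := cs.length_simple_mul (cs.wordProd (sortingWord (l ++ [s]) (k' :: K'))) s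
  rw [hword, cs.wordProd_cons, List.length_cons] at hlen
  refine .inr ⟨cs.wordProd (sortingWord (l ++ [s]) (k' :: K')), ?_, ?_, k' :: K', hK', rfl, ?_⟩
  · rw [← cs.wordProd_cons, ← hword]
    rfl
  · rw [cs.not_isLeftDescent_iff]
    omega
  · change _ = (sortingWord (l ++ [s]) (k' :: K')).length
    omega

theorem apply_eq_zero_of_mem_invRoots (hx : CSortable cs l x) {δ : B →₀ ℝ}
    (hδ : δ ∈ invRoots cs x) {j : B} (hj : j ∉ l) : δ j = 0 := by
  obtain ⟨K, -, rfl, -⟩ := hx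
  change δ ∈ invRoots cs (cs.wordProd (sortingWord l K)) at hδ
  have hneg := hδ.2 j
  rw [← cs.wordProd_reverse, geomRep_wordProd_apply_of_notMem cs fun h =>
    hj (mem_of_mem_sortingWord (List.mem_reverse.1 h))] at hneg
  exact le_antisymm hneg (hδ.1.nonneg j)

theorem isAligned (hx : CSortable cs l x) (hl : l.Nodup) : IsAligned cs l (invRoots cs x) := by
  induction hn : l.length + cs.length x using Nat.strong_induction_on generalizing l x with
  | _ n ih =>
    subst hn
    obtain _ | ⟨s, l⟩ := l
    · intro β γ a b _ _ _ _ hmem _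
      refine absurd (fun j => ?_) hmem.1.not_nonpos
      exact (hx.apply_eq_zero_of_mem_invRoots hmem List.not_mem_nil).le
    obtain ⟨hs, hlnd⟩ := List.nodup_cons.1 hl
    obtain hxl | ⟨y, rfl, hdesc, hy⟩ := hx.cons_cases hs
    · exact (ih _ (by simp) hxl hlnd rfl).cons fun δ hδ =>
        hxl.apply_eq_zero_of_mem_invRoots hδ hs
    · have hlen := cs.not_isLeftDescent_iff.1 hdesc
      have hrot : (l ++ [s]).Nodup := (List.perm_append_singleton s l).symm.nodup hl
      exact (ih _ (by simp [hlen]) hy hrot rfl).simple_mul hl hdesc fun δ hδ i hi =>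
        hx.apply_eq_zero_of_mem_invRoots hδ hi

theorem exists_leftInvSet_eq_inter {x' : W} (hx : CSortable cs l x) (hx' : CSortable cs l x')
    (hl : l.Nodup) : ∃ z, leftInvSet cs z = leftInvSet cs x ∩ leftInvSet cs x' := by
  have hbiclosed := (hx.isAligned hl).isBiclosed_invRoots_inter (hx'.isAligned hl)
  obtain ⟨z, hz⟩ := hbiclosed.exists_invRoots_eq ((invRoots_finite x).inter_of_left _)
  exact ⟨z, leftInvSet_eq_inter_of_invRoots_eq_inter hz⟩

end CSortable

theorem stmt14_general {B W : Type*} [DecidableEq B] [Group W] {M : CoxeterMatrix B}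
    (cs : CoxeterSystem M W) (l : List B) (hnd : l.Nodup)
    (x x' : W) (hx : CSortable cs l x) (hx' : CSortable cs l x')
    (m : W) (hm₁ : RightWeakLE cs m x) (hm₂ : RightWeakLE cs m x')
    (hm₃ : ∀ z : W, RightWeakLE cs z x → RightWeakLE cs z x' → RightWeakLE cs z m) :
    leftInvSet cs m = leftInvSet cs x ∩ leftInvSet cs x' := by
  obtain ⟨z, hz⟩ := hx.exists_leftInvSet_eq_inter hx' hnd
  refine (Set.subset_inter hm₁ hm₂).antisymm ?_
  rw [← hz]
  exact hm₃ z (hz.subset.trans Set.inter_subset_left) (hz.subset.trans Set.inter_subset_right)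

/-- If `x, x'` are `c`-sortable, then the left inversion set of their meet in the
right weak order is the intersection of their left inversion sets. -/
theorem stmt14 {B W : Type*} [DecidableEq B] [Group W] [Finite W] {M : CoxeterMatrix B}
    (cs : CoxeterSystem M W)
    (l : List B) (hnd : l.Nodup) (hall : ∀ b : B, b ∈ l)
    (x x' : W) (hx : CSortable cs l x) (hx' : CSortable cs l x')
    (m : W) (hm₁ : RightWeakLE cs m x) (hm₂ : RightWeakLE cs m x')
    (hm₃ : ∀ z : W, RightWeakLE cs z x → RightWeakLE cs z x' → RightWeakLE cs z m) :
    leftInvSet cs m = leftInvSet cs x ∩ leftInvSet cs x' :=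
  stmt14_general cs l hnd x x' hx hx' m hm₁ hm₂ hm₃
end

section
/- Let $W$ be a finite Coxeter group acting on $V$, let $c$ be a standard Coxeter element, and let $\mathfrak{y}$ lie in the open base chamber $\mathbb{B}$. Suppose $u = u_0 \lessdot_B u_1 \lessdot_B \cdots \lessdot_B u_r = uc$ is a saturated Bruhat chain with $u \in W_c^+$. Then the points $u_0\mathfrak{y}, u_1\mathfrak{y}, \ldots, u_r\mathfrak{y} \in V$ are affinely independent, so their convex hull is an $r$-dimensional simplex. -/
/-!
If `t` is a reflection and `y` lies off its mirror, then `t v - v` is a multiple of `t y - y` for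
every `v`. Telescoping along the chain, the direction space of the points `u₀ y, …, u_r y` contains
`u₀ (c v - v)` for every `v`, so its dimension is at least that of the image of `c - 1`, which is
the codimension of the fixed space of `c`. Carter's inequality bounds that codimension below by the
reflection length `r` of `c`, and `r + 1` points spanning `r` directions are affinely independent.

Carter's inequality comes from the fact that every `w ≠ 1` fixes only points of some mirror.
Otherwise `w` would fix a point off all mirrors, while finite reflection groups act freely on such
points, by the exchange argument for words in the simple reflections.
-/

open RealInnerProductSpace Module

/-- The Bruhat cover relation. -/
def BruhatCover {B W : Type*} [Group W] {M : CoxeterMatrix B} (cs : CoxeterSystem M W)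
    (u v : W) : Prop :=
  (∃ t : W, cs.IsReflection t ∧ v = u * t) ∧ cs.length v = cs.length u + 1

/-- `c` is a standard Coxeter element. -/
def IsStandardCoxeterElement {B W : Type*} [Group W] {M : CoxeterMatrix B}
    (cs : CoxeterSystem M W) (c : W) : Prop :=
  ∃ l : List B, l.Nodup ∧ (∀ b : B, b ∈ l) ∧ c = cs.wordProd l

/-- Reflection length. -/
noncomputable def reflLength {B W : Type*} [Group W] {M : CoxeterMatrix B}
    (cs : CoxeterSystem M W) (w : W) : ℕ :=
  sInf {n | ∃ l : List W, (∀ t ∈ l, cs.IsReflection t) ∧ l.length = n ∧ l.prod = w}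

section UnitNormal

variable {V : Type*} [NormedAddCommGroup V] [InnerProductSpace ℝ V] {g : V ≃ₗ[ℝ] V} {a y : V}

/-- `a` is a unit normal of `g`: the map `g` is the orthogonal reflection in the hyperplane
orthogonal to the unit vector `a`. It is determined up to sign by `g`. -/
def IsUnitNormal (g : V ≃ₗ[ℝ] V) (a : V) : Prop :=
  ‖a‖ = 1 ∧ ∀ z, g z = (ℝ ∙ a)ᗮ.reflection z

theorem exists_isUnitNormal {b : V} (hb : b ≠ 0) (hg : ∀ z, g z = (ℝ ∙ b)ᗮ.reflection z) :
    ∃ a, IsUnitNormal g a := by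
  refine ⟨‖b‖⁻¹ • b, norm_smul_inv_norm hb, fun z => ?_⟩
  have hspan : ℝ ∙ (‖b‖⁻¹ • b) = ℝ ∙ b :=
    Submodule.span_singleton_smul_eq (inv_ne_zero (norm_ne_zero_iff.mpr hb)).isUnit b
  rw [hg]
  simp only [hspan]

namespace IsUnitNormal

theorem inner_self (h : IsUnitNormal g a) : ⟪a, a⟫ = (1 : ℝ) := by
  rw [real_inner_self_eq_norm_sq, h.1, one_pow]

theorem ne_zero (h : IsUnitNormal g a) : a ≠ 0 := by
  rintro rfl
  simpa using h.1

theorem apply_eq (h : IsUnitNormal g a) (z : V) : g z = z - (2 * ⟪a, z⟫) • a := by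
  rw [h.2, Submodule.reflection_orthogonal_apply, Submodule.reflection_singleton_apply, h.1]
  simp only [RCLike.ofReal_real_eq_id, id_eq, one_pow, div_one]
  module

theorem of_apply_eq (ha : ‖a‖ = 1) (h : ∀ z, g z = z - (2 * ⟪a, z⟫) • a) : IsUnitNormal g a := by
  refine ⟨ha, fun z => ?_⟩
  rw [h, Submodule.reflection_orthogonal_apply, Submodule.reflection_singleton_apply, ha]
  simp only [RCLike.ofReal_real_eq_id, id_eq, one_pow, div_one]
  module

theorem neg (h : IsUnitNormal g a) : IsUnitNormal g (-a) :=
  of_apply_eq (by rw [norm_neg, h.1]) fun z => by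
    rw [h.apply_eq, inner_neg_left]
    module

theorem apply_apply (h : IsUnitNormal g a) (z : V) : g (g z) = z := by
  rw [h.2, h.2, Submodule.reflection_reflection]

theorem inner_map_map (h : IsUnitNormal g a) (x z : V) : ⟪g x, g z⟫ = ⟪x, z⟫ := by
  rw [h.2, h.2, LinearIsometryEquiv.inner_map_map]

theorem inner_ne_zero_iff (h : IsUnitNormal g a) : ⟪a, y⟫ ≠ 0 ↔ g y ≠ y := by
  rw [h.apply_eq, Ne, Ne, sub_eq_self, smul_eq_zero_iff_left h.ne_zero]
  simp

theorem inner_apply_self (h : IsUnitNormal g a) (z : V) :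
    ⟪g z, z⟫ = ⟪z, z⟫ - 2 * ⟪a, z⟫ ^ 2 := by
  rw [h.apply_eq, inner_sub_left, real_inner_smul_left]
  ring

theorem apply_sub_mem_span (h : IsUnitNormal g a) (hy : g y ≠ y) (v : V) :
    g v - v ∈ ℝ ∙ (g y - y) := by
  have hay := h.inner_ne_zero_iff.mpr hy
  refine Submodule.mem_span_singleton.mpr ⟨⟪a, v⟫ / ⟪a, y⟫, ?_⟩
  rw [h.apply_eq, h.apply_eq, sub_sub_cancel_left, sub_sub_cancel_left, smul_neg, smul_smul]
  congr 2
  field_simp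

end IsUnitNormal

end UnitNormal

/-- `ρ` is a faithful representation of a group generated by the set `T`, which is closed under
conjugation and acts by orthogonal reflections in hyperplanes. `T` need not contain every element
of the group that acts as a reflection. -/
structure IsReflectionRep {W V : Type*} [Group W] [NormedAddCommGroup V] [InnerProductSpace ℝ V]
    (T : Set W) (ρ : W →* (V ≃ₗ[ℝ] V)) : Prop where
  conj_mem : ∀ {t}, t ∈ T → ∀ w, w * t * w⁻¹ ∈ T
  closure_eq_top : Subgroup.closure T = ⊤
  injective : Function.Injective ρ
  exists_unitNormal : ∀ t ∈ T, ∃ a, IsUnitNormal (ρ t) a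

section Roots

variable {W V : Type*} [Group W] [NormedAddCommGroup V] [InnerProductSpace ℝ V]

/-- The normalised roots that are positive on `p`: the unit normals of the reflections in `T`
pointing to the side of `p`. -/
def positiveRoots (T : Set W) (ρ : W →* (V ≃ₗ[ℝ] V)) (p : V) : Set V :=
  {a | (∃ t ∈ T, IsUnitNormal (ρ t) a) ∧ 0 < ⟪a, p⟫}

/-- The normalised simple roots of the chamber of `p`. Instead of indecomposability, the definition
asks that no positive root whose mirror is closer to `p` makes an acute angle with `a`. -/
def simpleRoots (T : Set W) (ρ : W →* (V ≃ₗ[ℝ] V)) (p : V) : Set V :=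
  {a ∈ positiveRoots T ρ p | ∀ b ∈ positiveRoots T ρ p, ⟪b, p⟫ < ⟪a, p⟫ → ⟪a, b⟫ ≤ 0}

/-- The simple reflections of the chamber of `p`: the reflections along its simple roots. -/
def simpleReflections (T : Set W) (ρ : W →* (V ≃ₗ[ℝ] V)) (p : V) : Set W :=
  {s | ∃ a ∈ simpleRoots T ρ p, IsUnitNormal (ρ s) a}

end Roots

namespace IsReflectionRep

variable {W V : Type*} [Group W] [NormedAddCommGroup V] [InnerProductSpace ℝ V]
  {T : Set W} {ρ : W →* (V ≃ₗ[ℝ] V)} {a b p : V} {s t w : W}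

theorem inner_map_map (h : IsReflectionRep T ρ) (w : W) (x y : V) :
    ⟪ρ w x, ρ w y⟫ = ⟪x, y⟫ := by
  have hw : w ∈ Subgroup.closure T := h.closure_eq_top ▸ Subgroup.mem_top w
  induction hw using Subgroup.closure_induction generalizing x y with
  | mem t ht =>
    obtain ⟨a, ha⟩ := h.exists_unitNormal t ht
    exact ha.inner_map_map x y
  | one => simp only [map_one, LinearEquiv.coe_one, id_eq]
  | mul v w _ _ hv hw => simp only [map_mul, LinearEquiv.mul_apply, hv, hw]
  | inv w _ hw =>
    rw [← hw, ← LinearEquiv.mul_apply, ← LinearEquiv.mul_apply, ← map_mul, mul_inv_cancel,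
      map_one, LinearEquiv.coe_one, id_eq, id_eq]

theorem isUnitNormal_conj (h : IsReflectionRep T ρ) (ha : IsUnitNormal (ρ t) a) (w : W) :
    IsUnitNormal (ρ (w * t * w⁻¹)) (ρ w a) := by
  have hnorm : ‖ρ w a‖ = 1 := by
    rw [norm_eq_sqrt_real_inner, h.inner_map_map, ha.inner_self, Real.sqrt_one]
  refine .of_apply_eq hnorm fun z => ?_
  obtain ⟨x, rfl⟩ := (ρ w).surjective z
  rw [h.inner_map_map, ← LinearEquiv.mul_apply, ← map_mul, inv_mul_cancel_right, map_mul,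
    LinearEquiv.mul_apply, ha.apply_eq, map_sub, map_smul]

theorem eq_of_isUnitNormal (h : IsReflectionRep T ρ) (hs : IsUnitNormal (ρ s) a)
    (ht : IsUnitNormal (ρ t) a) : s = t :=
  h.injective <| LinearEquiv.ext fun z => by rw [hs.2, ht.2]

theorem mul_self_of_isUnitNormal (h : IsReflectionRep T ρ) (ht : IsUnitNormal (ρ t) a) :
    t * t = 1 :=
  h.injective <| LinearEquiv.ext fun z => by
    rw [map_mul, LinearEquiv.mul_apply, ht.apply_apply, map_one, LinearEquiv.coe_one, id_eq]

theorem exists_mem_positiveRoots (h : IsReflectionRep T ρ) (hp : ∀ t ∈ T, ρ t p ≠ p)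
    (ht : t ∈ T) : ∃ a ∈ positiveRoots T ρ p, IsUnitNormal (ρ t) a := by
  obtain ⟨a, ha⟩ := h.exists_unitNormal t ht
  rcases (ha.inner_ne_zero_iff.mpr (hp t ht)).lt_or_gt with hneg | hpos
  · exact ⟨-a, ⟨⟨t, ht, ha.neg⟩, by rwa [inner_neg_left, neg_pos]⟩, ha.neg⟩
  · exact ⟨a, ⟨⟨t, ht, ha⟩, hpos⟩, ha⟩

theorem map_mem_positiveRoots_of_simple (h : IsReflectionRep T ρ) (hp : ∀ t ∈ T, ρ t p ≠ p)
    (ha : a ∈ simpleRoots T ρ p) (hs : IsUnitNormal (ρ s) a) (hb : b ∈ positiveRoots T ρ p)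
    (hne : b ≠ a) : ρ s b ∈ positiveRoots T ρ p := by
  obtain ⟨⟨t, ht, hbt⟩, hbp⟩ := hb
  obtain ⟨⟨_, hap⟩, hmin⟩ := ha
  have hc := h.isUnitNormal_conj hbt s
  have hcT := h.conj_mem ht s
  refine ⟨⟨_, hcT, hc⟩, ?_⟩
  by_contra hle
  -- Otherwise `-ρ s b` is a positive root closer to `p` than `a` and at an acute angle with `a`.
  have hneg : 0 < ⟪-ρ s b, p⟫ := by
    rw [inner_neg_left, neg_pos]
    exact lt_of_le_of_ne (not_lt.mp hle) (hc.inner_ne_zero_iff.mpr (hp _ hcT))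
  have hcp : ⟪-ρ s b, p⟫ = 2 * ⟪a, b⟫ * ⟪a, p⟫ - ⟪b, p⟫ := by
    rw [hs.apply_eq, neg_sub, inner_sub_left, real_inner_smul_left]
  have hca : ⟪a, -ρ s b⟫ = ⟪a, b⟫ := by
    rw [hs.apply_eq, neg_sub, inner_sub_right, real_inner_smul_right, hs.inner_self]
    ring
  have hab : 0 < ⟪a, b⟫ := by
    by_contra! hab
    nlinarith
  have hab' : ⟪a, b⟫ < 1 := (inner_lt_one_iff_real_of_norm_eq_one hs.1 hbt.1).mpr hne.symm
  have hle_b : ⟪a, p⟫ ≤ ⟪b, p⟫ := by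
    by_contra! hlt
    exact hab.not_ge (hmin b ⟨⟨t, ht, hbt⟩, hbp⟩ hlt)
  have hlt : ⟪-ρ s b, p⟫ < ⟪a, p⟫ := by nlinarith
  exact hab.not_ge (hca ▸ hmin _ ⟨⟨_, hcT, hc.neg⟩, hneg⟩ hlt)

/-- The pairing `⟪ρ t p, p⟫` increases as the mirror of `t` approaches `p`. -/
theorem exists_closer_of_notMem_simpleReflections (h : IsReflectionRep T ρ)
    (hp : ∀ t ∈ T, ρ t p ≠ p) (ht : t ∈ T) (htS : t ∉ simpleReflections T ρ p) :
    ∃ s ∈ T, ⟪ρ t p, p⟫ < ⟪ρ s p, p⟫ ∧ ⟪ρ t p, p⟫ < ⟪ρ (s * t * s⁻¹) p, p⟫ := by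
  obtain ⟨a, ha, hta⟩ := h.exists_mem_positiveRoots hp ht
  obtain ⟨b, ⟨⟨s, hs, hsb⟩, hbp⟩, hlt, hab⟩ :
      ∃ b ∈ positiveRoots T ρ p, ⟪b, p⟫ < ⟪a, p⟫ ∧ 0 < ⟪a, b⟫ := by
    by_contra! hcon
    exact htS ⟨a, ⟨ha, hcon⟩, hta⟩
  have hab' : ⟪a, b⟫ < 1 :=
    (inner_lt_one_iff_real_of_norm_eq_one hta.1 hsb.1).mpr (by rintro rfl; exact hlt.false)
  have hval : ⟪ρ s a, p⟫ = ⟪a, p⟫ - 2 * ⟪a, b⟫ * ⟪b, p⟫ := by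
    rw [hsb.apply_eq, inner_sub_left, real_inner_smul_left, real_inner_comm a b]
  have hsq : ⟪ρ s a, p⟫ ^ 2 < ⟪a, p⟫ ^ 2 :=
    sq_lt_sq' (by rw [hval]; nlinarith) (by rw [hval]; nlinarith)
  refine ⟨s, hs, ?_, ?_⟩
  · rw [hta.inner_apply_self, hsb.inner_apply_self]
    nlinarith
  · rw [hta.inner_apply_self, (h.isUnitNormal_conj hta s).inner_apply_self]
    linarith

theorem subset_closure_simpleReflections [Finite W] (h : IsReflectionRep T ρ)
    (hp : ∀ t ∈ T, ρ t p ≠ p) : T ⊆ Subgroup.closure (simpleReflections T ρ p) := by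
  by_contra hT
  obtain ⟨t, ⟨ht, htS⟩, hmax⟩ := Set.exists_max_image
    (T \ Subgroup.closure (simpleReflections T ρ p)) (fun t => ⟪ρ t p, p⟫) (Set.toFinite _)
    (Set.not_subset.mp hT)
  have mem_of_closer {s : W} (hs : s ∈ T) (hlt : ⟪ρ t p, p⟫ < ⟪ρ s p, p⟫) :
      s ∈ Subgroup.closure (simpleReflections T ρ p) := by
    by_contra hsS
    exact hlt.not_ge (hmax s ⟨hs, hsS⟩)
  obtain ⟨s, hs, hlt, hlt_conj⟩ := h.exists_closer_of_notMem_simpleReflections hp ht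
    fun ht_simple => htS (Subgroup.subset_closure ht_simple)
  have hs_mem := mem_of_closer hs hlt
  have hconj_mem := mem_of_closer (h.conj_mem ht s) hlt_conj
  have htconj : t = s⁻¹ * (s * t * s⁻¹) * s := by group
  exact htS (htconj ▸ mul_mem (mul_mem (inv_mem hs_mem) hconj_mem) hs_mem)

theorem exists_simple_word_mul_eq (h : IsReflectionRep T ρ) (hp : ∀ t ∈ T, ρ t p ≠ p)
    (l : List W) (hl : ∀ s ∈ l, s ∈ simpleReflections T ρ p) (ha : a ∈ positiveRoots T ρ p)
    (ht : IsUnitNormal (ρ t) a) (hneg : ⟪a, ρ l.prod p⟫ < 0) :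
    ∃ l' : List W, (∀ s ∈ l', s ∈ simpleReflections T ρ p) ∧ l'.length + 1 = l.length ∧
      t * l.prod = l'.prod := by
  induction l generalizing t a with
  | nil =>
    rw [List.prod_nil, map_one, LinearEquiv.coe_one, id_eq] at hneg
    exact absurd ha.2 hneg.not_gt
  | cons s l ih =>
    obtain ⟨⟨b, hb, hsb⟩, hl⟩ := List.forall_mem_cons.mp hl
    have hss := h.mul_self_of_isUnitNormal hsb
    by_cases hab : a = b
    · subst hab
      refine ⟨l, hl, rfl, ?_⟩
      rw [h.eq_of_isUnitNormal ht hsb, List.prod_cons, ← mul_assoc, hss, one_mul]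
    · have hneg' : ⟪ρ s a, ρ l.prod p⟫ < 0 := by
        rwa [← hsb.apply_apply (ρ l.prod p), hsb.inner_map_map, ← LinearEquiv.mul_apply,
          ← map_mul, ← List.prod_cons]
      obtain ⟨l', hl', hlen, hprod⟩ := ih hl (h.map_mem_positiveRoots_of_simple hp hb hsb ha hab)
        (h.isUnitNormal_conj ht s) hneg'
      refine ⟨s :: l', List.forall_mem_cons.mpr ⟨⟨b, hb, hsb⟩, hl'⟩, by simp [hlen], ?_⟩
      rw [List.prod_cons, List.prod_cons, ← hprod, inv_eq_of_mul_eq_one_left hss]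
      simp only [← mul_assoc, hss, one_mul]

theorem prod_eq_one_of_simple_word (h : IsReflectionRep T ρ) (hp : ∀ t ∈ T, ρ t p ≠ p)
    (l : List W) (hl : ∀ s ∈ l, s ∈ simpleReflections T ρ p) (hfix : ρ l.prod p = p) :
    l.prod = 1 := by
  induction hn : l.length using Nat.strong_induction_on generalizing l with
  | _ n ih =>
    cases l with
    | nil => rfl
    | cons s l =>
      obtain ⟨⟨a, ha, hsa⟩, hl⟩ := List.forall_mem_cons.mp hl
      have hs_apply : ρ l.prod p = ρ s p := by
        rw [← hsa.apply_apply (ρ l.prod p), ← LinearEquiv.mul_apply (ρ s) (ρ l.prod), ← map_mul,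
          ← List.prod_cons, hfix]
      have hneg : ⟪a, ρ l.prod p⟫ < 0 := by
        rw [hs_apply, hsa.apply_eq, inner_sub_right, real_inner_smul_right, hsa.inner_self]
        linarith [ha.1.2]
      obtain ⟨l', hl', hlen, hprod⟩ := h.exists_simple_word_mul_eq hp l hl ha.1 hsa hneg
      rw [List.prod_cons, hprod] at hfix ⊢
      exact ih _ (by rw [← hn, List.length_cons]; omega) l' hl' hfix rfl

theorem eq_one_of_apply_eq [Finite W] (h : IsReflectionRep T ρ) (hp : ∀ t ∈ T, ρ t p ≠ p)
    (hw : ρ w p = p) : w = 1 := by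
  have hcl : w ∈ Submonoid.closure (simpleReflections T ρ p) := by
    rw [← Subgroup.closure_toSubmonoid_of_finite, Subgroup.mem_toSubmonoid]
    refine (Subgroup.closure_le _).mpr (h.subset_closure_simpleReflections hp) ?_
    rw [h.closure_eq_top]
    exact Subgroup.mem_top w
  obtain ⟨l, hl, rfl⟩ := Submonoid.exists_list_of_mem_closure hcl
  exact h.prod_eq_one_of_simple_word hp l hl hw

theorem exists_unitNormal_orthogonal_fixedSubmodule [Finite W] (h : IsReflectionRep T ρ)
    (hw : w ≠ 1) :
    ∃ t ∈ T, ∃ a ∈ (ρ w).fixedSubmoduleᗮ, IsUnitNormal (ρ t) a := by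
  by_contra! hcon
  choose a ha using fun t : T => h.exists_unitNormal t t.2
  obtain ⟨p, hpw, hp⟩ := Module.Dual.exists_forall_mem_ne_zero_of_forall_exists
    (ρ w).fixedSubmodule (fun t : T => innerₗ V (a t)) fun t => by
      by_contra! hzero
      refine hcon t t.2 (a t) ?_ (ha t)
      exact (Submodule.mem_orthogonal' _ _).mpr hzero
  exact hw <| h.eq_one_of_apply_eq
    (fun t ht => (ha ⟨t, ht⟩).inner_ne_zero_iff.mp (hp ⟨t, ht⟩))
    (LinearMap.mem_fixedSubmodule_iff.mp hpw)

section FiniteDimensional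

variable [FiniteDimensional ℝ V]

theorem range_sub_id_eq_orthogonal_fixedSubmodule (h : IsReflectionRep T ρ) (w : W) :
    LinearMap.range ((ρ w : V →ₗ[ℝ] V) - LinearMap.id) = (ρ w).fixedSubmoduleᗮ := by
  apply Submodule.eq_of_le_of_finrank_eq
  · rintro _ ⟨v, rfl⟩
    refine (Submodule.mem_orthogonal _ _).mpr fun x hx => ?_
    have hinner := h.inner_map_map w x v
    rw [show ρ w x = x from LinearMap.mem_fixedSubmodule_iff.mp hx] at hinner
    simp [inner_sub_right, hinner]
  · have hrank := LinearMap.finrank_range_add_finrank_ker ((ρ w : V →ₗ[ℝ] V) - LinearMap.id)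
    have horth := Submodule.finrank_add_finrank_orthogonal (ρ w).fixedSubmodule
    rw [← LinearMap.fixedSubmodule_eq_ker] at hrank
    omega

theorem finrank_fixedSubmodule_lt_mul (h : IsReflectionRep T ρ) (ht : IsUnitNormal (ρ t) a)
    (ha : a ∈ (ρ w).fixedSubmoduleᗮ) :
    finrank ℝ (ρ w).fixedSubmodule < finrank ℝ (ρ (t * w)).fixedSubmodule := by
  obtain ⟨v, hv⟩ : ∃ v, ρ w v = v + a := by
    obtain ⟨v, hv⟩ := h.range_sub_id_eq_orthogonal_fixedSubmodule w ▸ ha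
    exact ⟨v, by rw [← hv]; simp⟩
  have hav : 2 * ⟪a, v⟫ = (-1 : ℝ) := by
    have hinner := h.inner_map_map w v v
    rw [hv, real_inner_add_add_self, ht.inner_self, real_inner_comm a v] at hinner
    linarith
  have hv_fixed : ρ (t * w) v = v := by
    rw [map_mul, LinearEquiv.mul_apply, hv, ht.apply_eq, inner_add_right, ht.inner_self, mul_add,
      hav]
    module
  have hv_not_fixed : ρ w v ≠ v := by
    rw [hv, Ne, add_eq_left]
    exact ht.ne_zero
  apply Submodule.finrank_lt_finrank_of_lt
  refine lt_of_le_of_ne (fun x hx => ?_) fun heq => hv_not_fixed ?_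
  · have hax : ⟪a, x⟫ = (0 : ℝ) := (Submodule.mem_orthogonal' _ _).mp ha x hx
    rw [LinearMap.mem_fixedSubmodule_iff, LinearEquiv.coe_coe] at hx ⊢
    rw [map_mul, LinearEquiv.mul_apply, hx, ht.apply_eq, hax, mul_zero, zero_smul, sub_zero]
  · exact LinearMap.mem_fixedSubmodule_iff.mp (heq ▸ LinearMap.mem_fixedSubmodule_iff.mpr hv_fixed)

/-- Carter's inequality, the hard half of the equality between reflection length and the
codimension of the fixed space. -/
theorem exists_word_length_add_finrank_fixedSubmodule_le [Finite W] (h : IsReflectionRep T ρ)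
    (w : W) : ∃ l : List W, (∀ t ∈ l, t ∈ T) ∧ l.prod = w ∧
      l.length + finrank ℝ (ρ w).fixedSubmodule ≤ finrank ℝ V := by
  induction hn : finrank ℝ V - finrank ℝ (ρ w).fixedSubmodule using Nat.strong_induction_on
    generalizing w with
  | _ n ih =>
    by_cases hw : w = 1
    · exact ⟨[], by simp, by simp [hw], by simpa using Submodule.finrank_le _⟩
    · obtain ⟨t, ht, a, ha, hta⟩ := h.exists_unitNormal_orthogonal_fixedSubmodule hw
      have hlt := h.finrank_fixedSubmodule_lt_mul hta ha
      have hle := Submodule.finrank_le (ρ (t * w)).fixedSubmodule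
      obtain ⟨l, hl, hprod, hlen⟩ := ih _ (by omega) (t * w) rfl
      refine ⟨t :: l, List.forall_mem_cons.mpr ⟨ht, hl⟩, ?_, by rw [List.length_cons]; omega⟩
      rw [List.prod_cons, hprod, ← mul_assoc, h.mul_self_of_isUnitNormal hta, one_mul]

theorem le_finrank_range_sub_id [Finite W] (h : IsReflectionRep T ρ) {n : ℕ}
    (hw : ∀ l : List W, (∀ t ∈ l, t ∈ T) → l.prod = w → n ≤ l.length) :
    n ≤ finrank ℝ (LinearMap.range ((ρ w : V →ₗ[ℝ] V) - LinearMap.id)) := by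
  obtain ⟨l, hl, hprod, hlen⟩ := h.exists_word_length_add_finrank_fixedSubmodule_le w
  have hnl := hw l hl hprod
  have horth := Submodule.finrank_add_finrank_orthogonal (ρ w).fixedSubmodule
  rw [h.range_sub_id_eq_orthogonal_fixedSubmodule]
  omega

end FiniteDimensional

theorem apply_sub_apply_zero_mem_vectorSpan (h : IsReflectionRep T ρ)
    (hp : ∀ t ∈ T, ρ t p ≠ p) {n : ℕ} {u : Fin (n + 1) → W}
    (hu : ∀ i : Fin n, ∃ t ∈ T, u i.succ = u i.castSucc * t) (i : Fin (n + 1)) (v : V) :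
    ρ (u i) v - ρ (u 0) v ∈ vectorSpan ℝ (Set.range fun j => ρ (u j) p) := by
  induction i using Fin.induction with
  | zero => simp
  | succ i ih =>
    obtain ⟨t, ht, hstep⟩ := hu i
    obtain ⟨a, ha⟩ := h.exists_unitNormal t ht
    have apply_succ_sub (z : V) :
        ρ (u i.succ) z - ρ (u i.castSucc) z = ρ (u i.castSucc) (ρ t z - z) := by
      rw [hstep, map_mul, LinearEquiv.mul_apply, map_sub]
    have hstep_mem : ρ (u i.succ) v - ρ (u i.castSucc) v ∈
        vectorSpan ℝ (Set.range fun j => ρ (u j) p) := by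
      obtain ⟨k, hk⟩ := Submodule.mem_span_singleton.mp (ha.apply_sub_mem_span (hp t ht) v)
      rw [apply_succ_sub, ← hk, map_smul, ← apply_succ_sub]
      exact Submodule.smul_mem _ k
        (vsub_mem_vectorSpan ℝ (Set.mem_range_self i.succ) (Set.mem_range_self i.castSucc))
    simpa only [sub_add_sub_cancel] using add_mem hstep_mem ih

theorem of_coxeterSystem {B : Type*} {M : CoxeterMatrix B} (cs : CoxeterSystem M W)
    (hρ : Function.Injective ρ) {β : W → V}
    (hβ : ∀ t : W, cs.IsReflection t → β t ≠ 0 ∧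
      ∀ z : V, ρ t z = z - (2 * ⟪β t, z⟫ / ⟪β t, β t⟫) • β t) :
    IsReflectionRep {t | cs.IsReflection t} ρ where
  conj_mem ht w := ht.conj w
  closure_eq_top := by
    rw [eq_top_iff, ← cs.subgroup_closure_range_simple]
    exact Subgroup.closure_mono (Set.range_subset_iff.mpr cs.isReflection_simple)
  injective := hρ
  exists_unitNormal t ht := by
    refine exists_isUnitNormal (hβ t ht).1 fun z => ?_
    rw [(hβ t ht).2, Submodule.reflection_orthogonal_apply, Submodule.reflection_singleton_apply,
      real_inner_self_eq_norm_sq]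
    simp only [RCLike.ofReal_real_eq_id, id_eq]
    module

end IsReflectionRep

theorem stmt18_general {W V : Type*} [Group W] [Finite W] [NormedAddCommGroup V]
    [InnerProductSpace ℝ V] [FiniteDimensional ℝ V] {T : Set W} {ρ : W →* (V ≃ₗ[ℝ] V)}
    (h : IsReflectionRep T ρ) {y : V} (hy : ∀ t ∈ T, ρ t y ≠ y) {c : W} {n : ℕ}
    (hc : ∀ l : List W, (∀ t ∈ l, t ∈ T) → l.prod = c → n ≤ l.length)
    {u : Fin (n + 1) → W} (hu : ∀ i : Fin n, ∃ t ∈ T, u i.succ = u i.castSucc * t)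
    (hend : u (Fin.last n) = u 0 * c) :
    AffineIndependent ℝ (fun i => ρ (u i) y) := by
  rw [affineIndependent_iff_le_finrank_vectorSpan ℝ _ (Fintype.card_fin (n + 1))]
  have hle : (LinearMap.range ((ρ c : V →ₗ[ℝ] V) - LinearMap.id)).map (ρ (u 0) : V →ₗ[ℝ] V) ≤
      vectorSpan ℝ (Set.range fun i => ρ (u i) y) := by
    rintro _ ⟨_, ⟨v, rfl⟩, rfl⟩
    simpa [hend] using h.apply_sub_apply_zero_mem_vectorSpan hy hu (Fin.last n) v
  calc n ≤ finrank ℝ (LinearMap.range ((ρ c : V →ₗ[ℝ] V) - LinearMap.id)) :=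
        h.le_finrank_range_sub_id hc
    _ = finrank ℝ ((LinearMap.range ((ρ c : V →ₗ[ℝ] V) - LinearMap.id)).map
          (ρ (u 0) : V →ₗ[ℝ] V)) := ((ρ (u 0)).finrank_map_eq _).symm
    _ ≤ finrank ℝ (vectorSpan ℝ (Set.range fun i => ρ (u i) y)) := Submodule.finrank_mono hle

/-- If `u = u₀ ⋖_B u₁ ⋖_B ⋯ ⋖_B u_r = u₀ c` is a saturated Bruhat chain with
`u₀ ∈ W_c⁺`, and `𝔶` lies in the open base chamber, then the orbit points
`u₀𝔶, …, u_r𝔶` are affinely independent. -/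
theorem stmt18 {B W : Type*} [Group W] [Finite W] [Fintype B] {M : CoxeterMatrix B}
    (cs : CoxeterSystem M W) {r : ℕ} (hr : Fintype.card B = r)
    {V : Type*} [NormedAddCommGroup V] [InnerProductSpace ℝ V]
    [FiniteDimensional ℝ V] (hV : finrank ℝ V = r)
    -- the reflection representation: each reflection acts as the orthogonal
    -- reflection in its (positive) root:
    (ρ : W →* (V ≃ₗ[ℝ] V)) (hρ : Function.Injective ρ)
    (β : W → V)
    (hβ : ∀ t : W, cs.IsReflection t → β t ≠ 0 ∧
      ∀ z : V, ρ t z = z - (2 * ⟪β t, z⟫ / ⟪β t, β t⟫) • β t)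
    -- `𝔶` lies in the open base chamber:
    (𝔶 : V) (h𝔶 : ∀ t : W, cs.IsReflection t → 0 < ⟪β t, 𝔶⟫)
    (c : W) (hc : IsStandardCoxeterElement cs c) (hcT : reflLength cs c = r)
    (u : Fin (r + 1) → W)
    (hcov : ∀ i : Fin r, BruhatCover cs (u i.castSucc) (u i.succ))
    (hend : u (Fin.last r) = u 0 * c)
    (hWc : cs.length (u 0 * c) = cs.length (u 0) + r) :
    AffineIndependent ℝ (fun i : Fin (r + 1) => ρ (u i) 𝔶) := by
  exact stmt18_general (.of_coxeterSystem cs hρ hβ)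
    (fun t ht => by simpa [(hβ t ht).2, (hβ t ht).1] using (h𝔶 t ht).ne')
    (fun l hl hprod => hcT ▸ Nat.sInf_le ⟨l, hl, rfl, hprod⟩) (fun i => (hcov i).1) hend
end
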